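/- Fix Ω₀ > 0 and δ > 0, let ℓ_ε = δ√ε, let 𝓛 = {p = (mℓ_ε, nℓ_ε) : m, n ∈ ℤ, |p| ≤ 1 − 2√2 ℓ_ε}, and for η > 0 let Λ = B₁ \ ⋃_{p∈𝓛} B(p, ε^η). Identifying ℝ² with ℂ, define g_ε(z) = ∏_{p∈𝓛} (z − p)/|z − p| on Λ, and let A_ε(x) = (Ω₀/(2ε))(−x₂, x₁). Then for every η with 5/2 < η < ∞ there exist a constant C = C(Ω₀, δ, η) independent of ε and ε₀ > 0 such that for all 0 < ε < ε₀, ∫_Λ |(∇ − iA_ε)g_ε|² dx ≤ (π/(2ε²))·(Ω₀/2 − π/δ²)² + C |log ε| / ε. -/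

import Mathlib

open MeasureTheory Real Filter

noncomputable section

/-- Points of the plane. -/
abbrev Pt : Type := EuclideanSpace ℝ (Fin 2)

/-- The open unit disc. -/
def B1 : Set Pt := Metric.ball 0 1

/-- First partial derivative of a complex-valued function. -/
def pd1 (Ψ : Pt → ℂ) (x : Pt) : ℂ := fderiv ℝ Ψ x (EuclideanSpace.single 0 1)

/-- Second partial derivative of a complex-valued function. -/
def pd2 (Ψ : Pt → ℂ) (x : Pt) : ℂ := fderiv ℝ Ψ x (EuclideanSpace.single 1 1)

/-- Angular momentum operator `L = -i (x₁ ∂₂ - x₂ ∂₁)`. -/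
def angMom (Ψ : Pt → ℂ) (x : Pt) : ℂ :=
  -Complex.I * ((x 0 : ℂ) * pd2 Ψ x - (x 1 : ℂ) * pd1 Ψ x)

/-- The Gross-Pitaevskii energy density `|∇Ψ|² - Ω conj(Ψ) LΨ + |Ψ|⁴/ε²`. -/
def gpDensity (ε Ω : ℝ) (Ψ : Pt → ℂ) (x : Pt) : ℝ :=
  ‖pd1 Ψ x‖ ^ 2 + ‖pd2 Ψ x‖ ^ 2
    - Ω * (starRingEnd ℂ (Ψ x) * angMom Ψ x).re
    + ‖Ψ x‖ ^ 4 / ε ^ 2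

/-- The Gross-Pitaevskii functional on the unit disc. -/
def gpEnergy (ε Ω : ℝ) (Ψ : Pt → ℂ) : ℝ := ∫ x in B1, gpDensity ε Ω Ψ x

/-- Admissible (H¹, normalized) wave functions. -/
def gpAdm (Ψ : Pt → ℂ) : Prop :=
  DifferentiableOn ℝ Ψ B1 ∧
  IntegrableOn (fun x => ‖Ψ x‖ ^ 2) B1 ∧
  IntegrableOn (fun x => ‖pd1 Ψ x‖ ^ 2 + ‖pd2 Ψ x‖ ^ 2) B1 ∧
  IntegrableOn (fun x => ‖Ψ x‖ ^ 4) B1 ∧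
  IntegrableOn (fun x => (starRingEnd ℂ (Ψ x) * angMom Ψ x).re) B1 ∧
  (∫ x in B1, ‖Ψ x‖ ^ 2) = 1

/-- The GP ground-state energy: infimum of the functional over normalized functions. -/
def gpGround (ε Ω : ℝ) : ℝ := sInf {E | ∃ Ψ : Pt → ℂ, gpAdm Ψ ∧ E = gpEnergy ε Ω Ψ}

/-- A GP minimizer: a normalized admissible function attaining the infimum. -/
def IsGPMinimizer (ε Ω : ℝ) (Ψ : Pt → ℂ) : Prop :=
  gpAdm Ψ ∧ gpEnergy ε Ω Ψ = gpGround ε Ω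

/-- The Thomas-Fermi functional. -/
def tfEnergy (Ω₀ : ℝ) (ρ : Pt → ℝ) : ℝ :=
  ∫ x in B1, ((ρ x) ^ 2 - Ω₀ ^ 2 * ‖x‖ ^ 2 * ρ x / 4)

/-- Admissible TF densities: nonnegative, in L²(B₁), of total mass one. -/
def tfAdm (ρ : Pt → ℝ) : Prop :=
  IntegrableOn ρ B1 ∧ IntegrableOn (fun x => (ρ x) ^ 2) B1 ∧
  (∀ᵐ x ∂(volume.restrict B1), 0 ≤ ρ x) ∧ (∫ x in B1, ρ x) = 1

/-- The TF ground-state energy. -/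
def tfGround (Ω₀ : ℝ) : ℝ := sInf {E | ∃ ρ : Pt → ℝ, tfAdm ρ ∧ E = tfEnergy Ω₀ ρ}

/-- Radius of the TF "hole". -/
def R0 (Ω₀ : ℝ) : ℝ := Real.sqrt (1 - 4 / (Real.sqrt π * Ω₀))

/-- The TF minimizer. -/
def rhoTF (Ω₀ : ℝ) (x : Pt) : ℝ :=
  if Ω₀ ≤ 4 / Real.sqrt π then 1 / π - Ω₀ ^ 2 / 16 * (1 - 2 * ‖x‖ ^ 2)
  else max 0 (Ω₀ ^ 2 / 8 * (‖x‖ ^ 2 - 1) + Ω₀ / (2 * Real.sqrt π))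

/-- The square lattice of spacing `ℓ` restricted to radius `1 - 2√2 ℓ`. -/
def latt (ℓ : ℝ) : Set Pt :=
  {p | (∃ m : ℤ, p 0 = m * ℓ) ∧ (∃ n : ℤ, p 1 = n * ℓ) ∧ ‖p‖ ≤ 1 - 2 * Real.sqrt 2 * ℓ}

/-- The identification of the plane with `ℂ`. -/
def toC (x : Pt) : ℂ := (x 0 : ℂ) + (x 1 : ℂ) * Complex.I

/-- The phase factor carrying one vortex of degree 1 at each lattice point. -/
def gfun (ℓ : ℝ) (x : Pt) : ℂ := ∏ᶠ p ∈ latt ℓ, (toC x - toC p) / ((‖x - p‖ : ℝ) : ℂ)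

/-- The disc with holes of radius `ρr` around the lattice points removed. -/
def lambdaSet (ℓ ρr : ℝ) : Set Pt := B1 \ ⋃ p ∈ latt ℓ, Metric.ball p ρr

/-- The magnetic (covariant) kinetic energy density `|(∇ - iA)g|²` with
`A(x) = (Ω₀/2ε)(-x₂, x₁)`. -/
def covDensity (ε Ω₀ : ℝ) (g : Pt → ℂ) (x : Pt) : ℝ :=
  ‖pd1 g x - Complex.I * ((-(Ω₀ / (2 * ε)) * x 1 : ℝ) : ℂ) * g x‖ ^ 2 +
  ‖pd2 g x - Complex.I * (((Ω₀ / (2 * ε)) * x 0 : ℝ) : ℂ) * g x‖ ^ 2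


lemma vol_ball_real (a : ℂ) {r : ℝ} (hr : 0 ≤ r) : (volume : Measure ℂ).real (Metric.ball a r) = π * r ^ 2 := by
  rw [Measure.real, Complex.volume_ball]
  simp [ENNReal.toReal_mul, ENNReal.toReal_ofReal hr, mul_comm]

lemma radial_int {f : ℝ → ℝ} (hf : IntegrableOn (fun y => y * f y) (Set.Ioi 0)) (z : ℂ) :
    Integrable (fun w : ℂ => f ‖z - w‖) := by
  have h : Integrable (fun w : ℂ => f ‖w‖) := by
    rw [integrable_fun_norm_addHaar]
    simpa using hf
  exact h.comp_sub_left z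

lemma radial_val (f : ℝ → ℝ) (z : ℂ) :
    ∫ w : ℂ, f ‖z - w‖ = 2 * π * ∫ y in Set.Ioi (0:ℝ), y * f y := by
  rw [integral_sub_left_eq_self (fun w : ℂ => f ‖w‖) volume z, integral_fun_norm_addHaar]
  rw [vol_ball_real 0 zero_le_one]
  simp
  ring

/-- `1/|u|` cut off to `|u| < R`. -/
def kA (R y : ℝ) : ℝ := (Set.Ioo 0 R).indicator (fun y => y⁻¹) y

/-- `1/|u|^2` cut off to `ρ ≤ |u| < R`. -/
def kB (ρ R y : ℝ) : ℝ := (Set.Ico ρ R).indicator (fun y => (y ^ 2)⁻¹) y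

lemma kA_eq (R : ℝ) : ∀ y ∈ Set.Ioi (0:ℝ), (Set.Ioo 0 R).indicator (fun _ => (1:ℝ)) y = y * kA R y := by
  intro y hy
  have : y ≠ 0 := ne_of_gt hy
  unfold kA
  by_cases h : y ∈ Set.Ioo 0 R <;> simp [h, this]

lemma kA_int (R : ℝ) (z : ℂ) : Integrable (fun w : ℂ => kA R ‖z - w‖) := by
  apply radial_int
  apply IntegrableOn.congr_fun _ (kA_eq R) measurableSet_Ioi
  apply Integrable.integrableOn
  rw [integrable_indicator_iff measurableSet_Ioo]
  exact integrableOn_const (by simp)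

lemma kA_val {R : ℝ} (hR : 0 ≤ R) (z : ℂ) : ∫ w : ℂ, kA R ‖z - w‖ = 2 * π * R := by
  rw [radial_val, ← setIntegral_congr_fun measurableSet_Ioi (kA_eq R)]
  rw [setIntegral_indicator measurableSet_Ioo]
  have : Set.Ioi (0:ℝ) ∩ Set.Ioo 0 R = Set.Ioo 0 R := by
    ext; simp
  rw [this]; simp [hR]

lemma kB_eq {ρ R : ℝ} : ∀ y ∈ Set.Ioi (0:ℝ), (Set.Ico ρ R).indicator (fun y => y⁻¹) y = y * kB ρ R y := by
  intro y hy
  have : y ≠ 0 := ne_of_gt hy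
  unfold kB
  by_cases h : y ∈ Set.Ico ρ R
  · simp [h]; field_simp
  · simp [h]

lemma kB_int {ρ R : ℝ} (hρ : 0 < ρ) (z : ℂ) : Integrable (fun w : ℂ => kB ρ R ‖z - w‖) := by
  apply radial_int
  apply IntegrableOn.congr_fun _ kB_eq measurableSet_Ioi
  apply Integrable.integrableOn
  rw [integrable_indicator_iff measurableSet_Ico]
  apply IntegrableOn.mono_set _ Set.Ico_subset_Icc_self
  apply ContinuousOn.integrableOn_Icc
  intro y hy
  have : y ≠ 0 := (lt_of_lt_of_le hρ hy.1).ne'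
  fun_prop (disch := assumption)

lemma kB_val {ρ R : ℝ} (hρ : 0 < ρ) (hR : ρ ≤ R) (z : ℂ) :
    ∫ w : ℂ, kB ρ R ‖z - w‖ = 2 * π * Real.log (R / ρ) := by
  rw [radial_val, ← setIntegral_congr_fun measurableSet_Ioi kB_eq]
  rw [setIntegral_indicator measurableSet_Ico]
  have : Set.Ioi (0:ℝ) ∩ Set.Ico ρ R = Set.Ico ρ R := by
    ext; simp; intro h _; linarith
  rw [this, integral_Ico_eq_integral_Ioc, ← intervalIntegral.integral_of_le hR,
    integral_inv_of_pos hρ (by linarith)]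

/-- The far kernel. -/
def kC (ℓ y : ℝ) : ℝ := (Set.Ioi ℓ).indicator (fun y => y ^ (-3:ℝ)) y

lemma kC_eq {ℓ : ℝ} : ∀ y ∈ Set.Ioi (0:ℝ), (Set.Ioi ℓ).indicator (fun y => y ^ (-2:ℝ)) y = y * kC ℓ y := by
  intro y hy
  unfold kC
  by_cases h : y ∈ Set.Ioi ℓ
  · simp only [h, Set.indicator_of_mem]
    rw [show (-2:ℝ) = 1 + (-3) by norm_num, Real.rpow_add hy, Real.rpow_one]
  · simp [h]

lemma kC_int {ℓ : ℝ} (hℓ : 0 < ℓ) (z : ℂ) : Integrable (fun w : ℂ => kC ℓ ‖z - w‖) := by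
  apply radial_int
  apply IntegrableOn.congr_fun _ kC_eq measurableSet_Ioi
  apply Integrable.integrableOn
  rw [integrable_indicator_iff measurableSet_Ioi]
  exact integrableOn_Ioi_rpow_of_lt (by norm_num) hℓ

lemma kC_val {ℓ : ℝ} (hℓ : 0 < ℓ) (z : ℂ) :
    ∫ w : ℂ, kC ℓ ‖z - w‖ = 2 * π / ℓ := by
  rw [radial_val, ← setIntegral_congr_fun measurableSet_Ioi kC_eq]
  rw [setIntegral_indicator measurableSet_Ioi]
  have : Set.Ioi (0:ℝ) ∩ Set.Ioi ℓ = Set.Ioi ℓ := by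
    ext; simp; intro h; linarith
  rw [this, integral_Ioi_rpow_of_lt (by norm_num) hℓ]
  norm_num
  rw [Real.rpow_neg_one]; ring

/-- second moment of the disc -/
lemma disc_sq : ∫ w in Metric.ball (0:ℂ) 1, ‖w‖ ^ 2 = π / 2 := by
  rw [← integral_indicator measurableSet_ball]
  have : ∀ w : ℂ, (Metric.ball (0:ℂ) 1).indicator (fun w => ‖w‖ ^ 2) w
      = (Set.Iio (1:ℝ)).indicator (fun y => y ^ 2) ‖0 - w‖ := by
    intro w
    by_cases h : ‖w‖ < 1 <;> simp [Set.indicator, h]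
  simp_rw [this]
  rw [radial_val ((Set.Iio (1:ℝ)).indicator (fun y => y ^ 2))]
  have : ∀ y : ℝ, y * (Set.Iio (1:ℝ)).indicator (fun y => y ^ 2) y = (Set.Iio (1:ℝ)).indicator (fun y => y ^ 3) y := by
    intro y
    by_cases h : y < 1 <;> simp [Set.indicator, h]; ring
  simp_rw [this]
  rw [setIntegral_indicator measurableSet_Iio]
  have : Set.Ioi (0:ℝ) ∩ Set.Iio 1 = Set.Ioo 0 1 := rfl
  rw [this, ← integral_Ioc_eq_integral_Ioo, ← intervalIntegral.integral_of_le zero_le_one, integral_pow]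
  norm_num; ring

/-- circle integral of the Cauchy kernel -/
lemma circ (z : ℂ) (hz : z ≠ 0) (r : ℝ) (hr : 0 < r) (hne : r ≠ ‖z‖) :
    ∫ θ in Set.Ioo (-π) π, (z - r * Complex.exp (θ * Complex.I))⁻¹ =
      if r < ‖z‖ then 2 * π / z else 0 := by
  have hper : Function.Periodic (fun θ : ℝ => (z - r * Complex.exp (θ * Complex.I))⁻¹) (2 * π) := by
    intro θ
    simp only
    congr 3
    push_cast
    rw [add_mul, Complex.exp_periodic]
  have h1 : ∫ θ in Set.Ioo (-π) π, (z - r * Complex.exp (θ * Complex.I))⁻¹ =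
      ∫ θ in (0:ℝ)..(2 * π), (z - r * Complex.exp (θ * Complex.I))⁻¹ := by
    rw [← integral_Ioc_eq_integral_Ioo, ← intervalIntegral.integral_of_le (by linarith [pi_pos])]
    have := hper.intervalIntegral_add_eq (-π) 0
    rw [show -π + 2 * π = π by ring, zero_add] at this
    exact this
  have hcirc : ∀ w ∈ Metric.sphere (0:ℂ) r, w ≠ 0 ∧ z - w ≠ 0 := by
    intro w hw
    simp at hw
    constructor
    · rintro rfl; simp at hw; linarith
    · intro h; rw [sub_eq_zero] at h; rw [h] at hne; exact hne hw.symm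
  have h2 : ∫ θ in (0:ℝ)..(2 * π), (z - r * Complex.exp (θ * Complex.I))⁻¹ =
      Complex.I⁻¹ * ∮ w in C(0, r), (z⁻¹ * (w - 0)⁻¹ - z⁻¹ * (w - z)⁻¹) := by
    rw [circleIntegral, ← intervalIntegral.integral_const_mul]
    congr 1
    ext θ
    have hm := hcirc (circleMap 0 r θ) (circleMap_mem_sphere 0 hr.le θ)
    obtain ⟨ha, hb⟩ := hm
    have hc : circleMap 0 r θ - z ≠ 0 := by rw [← neg_sub]; exact neg_ne_zero.mpr hb
    rw [deriv_circleMap, smul_eq_mul]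
    have : r * Complex.exp (θ * Complex.I) = circleMap 0 r θ := by simp [circleMap]
    rw [this, sub_zero]
    set w := circleMap 0 r θ
    rw [show w * Complex.I * (z⁻¹ * w⁻¹ - z⁻¹ * (w - z)⁻¹) = Complex.I * (w * (z⁻¹ * w⁻¹ - z⁻¹ * (w - z)⁻¹)) by ring]
    rw [inv_mul_cancel_left₀ Complex.I_ne_zero]
    field_simp
    ring
  rw [h1, h2, circleIntegral.integral_sub, circleIntegral.integral_const_mul, circleIntegral.integral_const_mul,
    circleIntegral.integral_sub_center_inv _ hr.ne']
  · split_ifs with h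
    · have : ∮ w in C(0, r), (w - z)⁻¹ = 0 := by
        apply Complex.circleIntegral_eq_zero_of_differentiable_on_off_countable hr.le Set.countable_empty
        · intro w hw
          have : w - z ≠ 0 := by
            intro h'; rw [sub_eq_zero] at h'; subst h'; simp at hw; linarith
          fun_prop (disch := assumption)
        · intro w hw
          have : w - z ≠ 0 := by
            intro h'; rw [sub_eq_zero] at h'; subst h'; simp at hw; linarith
          fun_prop (disch := assumption)
      rw [this]
      have := Complex.I_ne_zero
      field_simp
      ring
    · rw [circleIntegral.integral_sub_inv_of_mem_ball]
      · ring
      · simp; exact lt_of_le_of_ne (not_lt.mp h) (Ne.symm hne)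
  · apply ContinuousOn.circleIntegrable hr.le
    intro w hw
    have := (hcirc w hw).1
    have : w - 0 ≠ 0 := by simpa
    fun_prop (disch := assumption)
  · apply ContinuousOn.circleIntegrable hr.le
    intro w hw
    have := (hcirc w hw).2
    have : w - z ≠ 0 := by rw [← neg_sub]; exact neg_ne_zero.mpr this
    fun_prop (disch := assumption)


lemma kA_nonneg (R y : ℝ) : 0 ≤ kA R y := by
  unfold kA
  apply Set.indicator_nonneg
  intro y hy; exact inv_nonneg.mpr hy.1.le

lemma kB_nonneg (ρ R y : ℝ) : 0 ≤ kB ρ R y := by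
  unfold kB
  apply Set.indicator_nonneg
  intro y hy; positivity

lemma kC_nonneg {ℓ : ℝ} (hℓ : 0 < ℓ) (y : ℝ) : 0 ≤ kC ℓ y := by
  unfold kC
  apply Set.indicator_nonneg
  intro y hy; exact Real.rpow_nonneg (hℓ.trans hy).le _

lemma inv_eq_kA {R y : ℝ} (hy : 0 ≤ y) (h : y < R) : y⁻¹ = kA R y := by
  unfold kA
  rcases hy.eq_or_lt with rfl | h0
  · simp
  · simp [h0, h]

lemma cauchy_int {z : ℂ} {R : ℝ} {s : Set ℂ} (hm : MeasurableSet s) (hs : s ⊆ Metric.ball z R) :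
    IntegrableOn (fun w => (z - w)⁻¹) s := by
  apply Integrable.mono' (kA_int R z).integrableOn
  · exact (measurable_const.sub measurable_id).inv.aestronglyMeasurable
  · filter_upwards [ae_restrict_mem hm] with w hw
    have := hs hw
    rw [Metric.mem_ball, dist_comm, dist_eq_norm] at this
    rw [norm_inv, inv_eq_kA (norm_nonneg _) this]

lemma unit_ball_sub {z : ℂ} (hz : ‖z‖ < 1) : Metric.ball (0:ℂ) 1 ⊆ Metric.ball z 2 := by
  intro w hw
  simp only [Metric.mem_ball, dist_zero_right] at hw
  rw [Metric.mem_ball, dist_eq_norm]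
  linarith [norm_sub_le w z]

lemma newton {z : ℂ} (hz : ‖z‖ < 1) :
    ∫ w in Metric.ball (0:ℂ) 1, (z - w)⁻¹ = π * (starRingEnd ℂ) z := by
  by_cases h0 : z = 0
  · subst h0
    rw [← integral_indicator measurableSet_ball]
    have key : ∫ w : ℂ, (Metric.ball (0:ℂ) 1).indicator (fun w => (0 - w)⁻¹) w
      = - ∫ w : ℂ, (Metric.ball (0:ℂ) 1).indicator (fun w => (0 - w)⁻¹) w := by
      rw [← integral_neg]
      rw [← integral_neg_eq_self]
      congr 1
      ext1 w
      by_cases h : ‖w‖ < 1 <;> simp [Set.indicator, h]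
    simpa [CharZero.eq_neg_self_iff] using key
  have hi := cauchy_int (z := z) measurableSet_ball (unit_ball_sub hz)
  rw [← integral_indicator measurableSet_ball]
  rw [← integrable_indicator_iff measurableSet_ball] at hi
  set f : ℂ → ℂ := (Metric.ball (0:ℂ) 1).indicator (fun w => (z - w)⁻¹) with hf
  have hfm : Measurable f := by
    apply Measurable.indicator _ measurableSet_ball
    exact (measurable_const.sub measurable_id).inv
  rw [← Complex.integral_comp_polarCoord_symm]
  have hcs : Continuous (Complex.polarCoord.symm : ℝ × ℝ → ℂ) := by
    have : (Complex.polarCoord.symm : ℝ × ℝ → ℂ) = fun p => p.1 * (Real.cos p.2 + Real.sin p.2 * Complex.I) := by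
      ext p; exact Complex.polarCoord_symm_apply p
    rw [this]; fun_prop
  have hpi : IntegrableOn (fun p : ℝ × ℝ => p.1 • f (Complex.polarCoord.symm p)) polarCoord.target := by
    constructor
    · exact (measurable_fst.smul (hfm.comp hcs.measurable)).aestronglyMeasurable
    · have := hi.2
      rw [HasFiniteIntegral, ← Complex.lintegral_comp_polarCoord_symm] at this
      rw [HasFiniteIntegral]
      refine lt_of_eq_of_lt ?_ this
      apply setLIntegral_congr_fun polarCoord.open_target.measurableSet
      intro p hp
      simp only [polarCoord_target, Set.mem_prod, Set.mem_Ioi] at hp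
      simp only [enorm_smul, smul_eq_mul]
      rw [Real.enorm_of_nonneg hp.1.le]
  rw [polarCoord_target] at hpi ⊢
  rw [Measure.volume_eq_prod] at hpi ⊢
  rw [setIntegral_prod _ hpi]
  have hin : ∀ r ∈ Set.Ioi (0:ℝ), r ≠ ‖z‖ →
      ∫ θ in Set.Ioo (-π) π, r • f (Complex.polarCoord.symm (r, θ)) =
      (Set.Iio ‖z‖).indicator (fun r : ℝ => (r : ℂ) * (2 * π / z)) r := by
    intro r hr hne
    rw [integral_smul]
    have hfe : ∀ θ : ℝ, f (Complex.polarCoord.symm (r, θ)) =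
        (Set.Iio (1:ℝ)).indicator (fun r : ℝ => (z - r * Complex.exp (θ * Complex.I))⁻¹) r := by
      intro θ
      rw [hf, Complex.polarCoord_symm_apply]
      simp only
      have h2 : (Real.cos θ : ℂ) + Real.sin θ * Complex.I = Complex.exp (θ * Complex.I) := by
        rw [Complex.exp_mul_I]; push_cast; rfl
      have h1 : ‖(r:ℂ) * ((Real.cos θ : ℂ) + Real.sin θ * Complex.I)‖ = r := by
        rw [h2, norm_mul, Complex.norm_exp_ofReal_mul_I, mul_one, Complex.norm_real, Real.norm_of_nonneg (le_of_lt hr)]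
      simp only [Set.indicator, Metric.mem_ball, dist_zero_right, h1, Set.mem_Iio]
      rw [h2]
    simp_rw [hfe]
    by_cases hr1 : r < 1
    · simp only [Set.indicator, Set.mem_Iio, hr1, if_true]
      rw [circ z h0 r hr hne]
      split_ifs <;> simp
    · have : ¬ r < ‖z‖ := by linarith
      simp [Set.indicator, hr1, this]
  have hzn : 0 < ‖z‖ := norm_pos_iff.mpr h0
  rw [setIntegral_congr_ae (g := (Set.Iio ‖z‖).indicator (fun r : ℝ => (r : ℂ) * (2 * π / z))) measurableSet_Ioi]
  · rw [setIntegral_indicator measurableSet_Iio]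
    have : Set.Ioi (0:ℝ) ∩ Set.Iio ‖z‖ = Set.Ioo 0 ‖z‖ := rfl
    rw [this, ← integral_Ioc_eq_integral_Ioo, ← intervalIntegral.integral_of_le hzn.le,
      intervalIntegral.integral_mul_const, intervalIntegral.integral_ofReal, integral_id]
    have : (starRingEnd ℂ) z * z = (‖z‖:ℂ) ^ 2 := Complex.conj_mul' z
    push_cast
    field_simp
    rw [mul_comm z, this]; ring
  · have : ∀ᵐ r : ℝ, r ≠ ‖z‖ := by
      simp [ae_iff]
    filter_upwards [this] with r hne hr
    exact hin r hr hne

/-- the weighted moment of a vortex -/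
lemma vortex_moment {p : ℂ} (hp : ‖p‖ < 1) :
    IntegrableOn (fun z => z * (z - p)⁻¹) (Metric.ball 0 1) ∧
    ∫ z in Metric.ball (0:ℂ) 1, z * (z - p)⁻¹ = (π * (1 - ‖p‖ ^ 2) : ℝ) := by
  have hi := cauchy_int (z := p) measurableSet_ball (unit_ball_sub hp)
  have he : ∀ᵐ z ∂((volume : Measure ℂ).restrict (Metric.ball (0:ℂ) 1)), 1 - p * (p - z)⁻¹ = z * (z - p)⁻¹ := by
    have : ∀ᵐ z ∂((volume : Measure ℂ).restrict (Metric.ball (0:ℂ) 1)), z ≠ p := by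
      apply ae_restrict_of_ae
      simp [ae_iff]
    filter_upwards [this] with z hz
    have h1 : z - p ≠ 0 := sub_ne_zero.mpr hz
    rw [← neg_sub z p, inv_neg]
    field_simp
    ring
  have hc : IntegrableOn (fun _ : ℂ => (1:ℂ)) (Metric.ball (0:ℂ) 1) := integrableOn_const (by simp [Complex.volume_ball])
  constructor
  · exact (hc.sub (hi.const_mul p)).congr he
  · rw [← integral_congr_ae he, integral_sub hc (hi.const_mul p), integral_const_mul, newton hp]
    rw [setIntegral_const, vol_ball_real 0 zero_le_one]
    have : p * (starRingEnd ℂ) p = (‖p‖:ℂ) ^ 2 := Complex.mul_conj' p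
    push_cast
    rw [mul_left_comm, this]
    simp; ring


/-- Half-open square cell of side `ℓ` centred at `p`. -/
def cell (ℓ : ℝ) (p : ℂ) : Set ℂ :=
  {w | w.re ∈ Set.Ico (p.re - ℓ / 2) (p.re + ℓ / 2) ∧ w.im ∈ Set.Ico (p.im - ℓ / 2) (p.im + ℓ / 2)}

/-- The finite set `S` is the truncated lattice. -/
def IsLat (ℓ : ℝ) (S : Finset ℂ) : Prop :=
  ∀ p, p ∈ S ↔ (∃ m n : ℤ, p.re = m * ℓ ∧ p.im = n * ℓ) ∧ ‖p‖ ≤ 1 - 2 * √2 * ℓ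

lemma cell_meas (ℓ : ℝ) (p : ℂ) : MeasurableSet (cell ℓ p) :=
  (Complex.measurable_re measurableSet_Ico).inter (Complex.measurable_im measurableSet_Ico)

lemma cell_norm {ℓ : ℝ} {p w : ℂ} (hw : w ∈ cell ℓ p) : ‖w - p‖ ^ 2 ≤ ℓ ^ 2 / 2 := by
  obtain ⟨⟨h1, h2⟩, h3, h4⟩ := hw
  rw [Complex.sq_norm, Complex.normSq_apply]
  simp only [Complex.sub_re, Complex.sub_im]
  nlinarith

lemma cell_norm' {ℓ : ℝ} (hℓ : 0 < ℓ) {p w : ℂ} (hw : w ∈ cell ℓ p) : ‖w - p‖ ≤ 71 / 100 * ℓ := by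
  have := cell_norm hw
  apply abs_le_of_sq_le_sq' _ (by positivity) |>.2
  nlinarith

lemma cell_ball {ℓ : ℝ} (hℓ : 0 < ℓ) (p : ℂ) : cell ℓ p ⊆ Metric.ball p ℓ := by
  intro w hw
  rw [Metric.mem_ball, dist_eq_norm]
  linarith [cell_norm' hℓ hw]

lemma cell_pre (ℓ : ℝ) (p : ℂ) : cell ℓ p = Complex.measurableEquivRealProd ⁻¹'
    (Set.Ico (p.re - ℓ / 2) (p.re + ℓ / 2) ×ˢ Set.Ico (p.im - ℓ / 2) (p.im + ℓ / 2)) := by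
  ext w; simp [cell]

lemma cell_integral (ℓ : ℝ) (p : ℂ) (f g : ℝ → ℝ) :
    ∫ w in cell ℓ p, f w.re * g w.im =
      (∫ x in Set.Ico (p.re - ℓ / 2) (p.re + ℓ / 2), f x) *
      ∫ x in Set.Ico (p.im - ℓ / 2) (p.im + ℓ / 2), g x := by
  rw [← setIntegral_prod_mul, cell_pre]
  exact Complex.volume_preserving_equiv_real_prod.setIntegral_preimage_emb
    Complex.measurableEquivRealProd.measurableEmbedding (fun q : ℝ × ℝ => f q.1 * g q.2) _

lemma cell_vol {ℓ : ℝ} (hℓ : 0 < ℓ) (p : ℂ) : (volume : Measure ℂ).real (cell ℓ p) = ℓ ^ 2 := by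
  have := cell_integral ℓ p (fun _ => 1) (fun _ => 1)
  simp only [mul_one, setIntegral_const, smul_eq_mul] at this
  rw [this]
  simp [Measure.real, ENNReal.toReal_ofReal hℓ.le]
  ring

lemma cell_fin {ℓ : ℝ} (hℓ : 0 < ℓ) (p : ℂ) : volume (cell ℓ p) ≠ ⊤ := by
  apply ne_top_of_le_ne_top _ (measure_mono (cell_ball hℓ p))
  exact measure_ball_lt_top.ne

lemma int_lin {ℓ : ℝ} (hℓ : 0 < ℓ) (a : ℝ) : ∫ x in Set.Ico (a - ℓ / 2) (a + ℓ / 2), (x - a) = 0 := by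
  rw [integral_Ico_eq_integral_Ioc, ← intervalIntegral.integral_of_le (by linarith)]
  rw [intervalIntegral.integral_sub (by simp) (by simp)]
  simp
  ring

lemma cell_cont_int {ℓ : ℝ} (hℓ : 0 < ℓ) (p : ℂ) {E : Type*} [NormedAddCommGroup E] {f : ℂ → E} (hf : Continuous f) :
    IntegrableOn f (cell ℓ p) := by
  apply IntegrableOn.mono_set _ ((cell_ball hℓ p).trans Metric.ball_subset_closedBall)
  exact hf.continuousOn.integrableOn_compact (isCompact_closedBall _ _)

lemma cell_center {ℓ : ℝ} (hℓ : 0 < ℓ) (p : ℂ) : ∫ w in cell ℓ p, (w - p) = 0 := by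
  have hi : IntegrableOn (fun w => w - p) (cell ℓ p) := cell_cont_int hℓ p (by fun_prop)
  have h1 := cell_integral ℓ p (fun x => x - p.re) (fun _ => 1)
  have h2 := cell_integral ℓ p (fun _ => 1) (fun x => x - p.im)
  rw [int_lin hℓ] at h1 h2
  apply Complex.ext
  · have := Complex.reCLM.integral_comp_comm hi
    simp at this h1
    rw [← this]; simpa using h1
  · have := Complex.imCLM.integral_comp_comm hi
    simp at this h2
    rw [← this]; simpa using h2

lemma cell_disj {ℓ : ℝ} (hℓ : 0 < ℓ) {S : Finset ℂ} (hS : IsLat ℓ S) :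
    Set.PairwiseDisjoint (S : Set ℂ) (cell ℓ) := by
  intro p hp q hq hne
  rw [Function.onFun, Set.disjoint_left]
  rintro w ⟨⟨h1, h2⟩, h3, h4⟩ ⟨⟨h5, h6⟩, h7, h8⟩
  obtain ⟨⟨m, n, hm, hn⟩, -⟩ := (hS p).1 hp
  obtain ⟨⟨m', n', hm', hn'⟩, -⟩ := (hS q).1 hq
  have aux : ∀ a b : ℤ, (a * ℓ : ℝ) < b * ℓ + ℓ → a < b + 1 := by
    intro a b h
    have : (a : ℝ) < b + 1 := by
      by_contra hc
      push Not at hc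
      nlinarith
    exact_mod_cast this
  rw [hm] at h1 h2
  rw [hn] at h3 h4
  rw [hm'] at h5 h6
  rw [hn'] at h7 h8
  have e1 : m = m' := by
    have := aux m m' (by linarith)
    have := aux m' m (by linarith)
    omega
  have e2 : n = n' := by
    have := aux n n' (by linarith)
    have := aux n' n (by linarith)
    omega
  apply hne
  apply Complex.ext
  · rw [hm, hm', e1]
  · rw [hn, hn', e2]

lemma cell_cover {ℓ : ℝ} (hℓ : 0 < ℓ) {S : Finset ℂ} (hS : IsLat ℓ S) {w : ℂ} (hw : ‖w‖ < 1 - 4 * ℓ) :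
    ∃ p ∈ S, w ∈ cell ℓ p := by
  set m := ⌊w.re / ℓ + 1 / 2⌋ with hm
  set n := ⌊w.im / ℓ + 1 / 2⌋ with hn
  have aux : ∀ a : ℝ, a ∈ Set.Ico ((⌊a / ℓ + 1 / 2⌋ : ℝ) * ℓ - ℓ / 2) (⌊a / ℓ + 1 / 2⌋ * ℓ + ℓ / 2) := by
    intro a
    have h1 := Int.floor_le (a / ℓ + 1 / 2)
    have h2 := Int.lt_floor_add_one (a / ℓ + 1 / 2)
    have h3 : a / ℓ * ℓ = a := div_mul_cancel₀ a hℓ.ne'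
    constructor <;> nlinarith
  have hc : w ∈ cell ℓ ⟨m * ℓ, n * ℓ⟩ := ⟨aux _, aux _⟩
  refine ⟨⟨m * ℓ, n * ℓ⟩, (hS _).2 ⟨⟨m, n, rfl, rfl⟩, ?_⟩, hc⟩
  have h1 := cell_norm' hℓ hc
  set p : ℂ := ⟨m * ℓ, n * ℓ⟩
  have h2 : ‖p‖ ≤ ‖w‖ + ‖w - p‖ := by
    have := norm_sub_le w (w - p)
    simpa using this
  have h3 : √2 ≤ 1.42 := by
    rw [Real.sqrt_le_left (by norm_num)]; norm_num
  nlinarith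

lemma cell_in {ℓ : ℝ} (hℓ : 0 < ℓ) {S : Finset ℂ} (hS : IsLat ℓ S) {p : ℂ} (hp : p ∈ S) :
    cell ℓ p ⊆ Metric.ball 0 1 := by
  intro w hw
  have h1 := cell_norm' hℓ hw
  have h2 := ((hS p).1 hp).2
  have h3 : 1 ≤ √2 := by
    rw [Real.one_le_sqrt]; norm_num
  have h4 : ‖w‖ ≤ ‖p‖ + ‖w - p‖ := by
    have := norm_add_le p (w - p)
    simpa using this
  rw [Metric.mem_ball, dist_zero_right]
  nlinarith

/-- the boundary layer -/
def layer (ℓ : ℝ) (S : Finset ℂ) : Set ℂ := Metric.ball 0 1 \ ⋃ p ∈ S, cell ℓ p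

lemma union_meas (ℓ : ℝ) (S : Finset ℂ) : MeasurableSet (⋃ p ∈ S, cell ℓ p) :=
  Finset.measurableSet_biUnion S (fun p _ => cell_meas ℓ p)

lemma layer_meas (ℓ : ℝ) (S : Finset ℂ) : MeasurableSet (layer ℓ S) :=
  measurableSet_ball.diff (union_meas ℓ S)

lemma layer_sub {ℓ : ℝ} {S : Finset ℂ} : layer ℓ S ⊆ Metric.ball 0 1 := Set.sdiff_subset

lemma layer_norm {ℓ : ℝ} (hℓ : 0 < ℓ) {S : Finset ℂ} (hS : IsLat ℓ S) {w : ℂ} (hw : w ∈ layer ℓ S) :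
    1 - 4 * ℓ ≤ ‖w‖ := by
  by_contra hc
  push Not at hc
  obtain ⟨p, hp, hwp⟩ := cell_cover hℓ hS hc
  exact hw.2 (Set.mem_biUnion hp hwp)

lemma layer_vol {ℓ : ℝ} (hℓ : 0 < ℓ) (hℓ1 : 4 * ℓ < 1) {S : Finset ℂ} (hS : IsLat ℓ S) :
    (volume : Measure ℂ).real (layer ℓ S) ≤ 8 * π * ℓ := by
  have h1 : layer ℓ S ⊆ Metric.ball 0 1 \ Metric.ball 0 (1 - 4 * ℓ) := by
    intro w hw
    refine ⟨hw.1, ?_⟩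
    simpa using layer_norm hℓ hS hw
  have h2 := measureReal_mono (μ := (volume : Measure ℂ)) h1 (ne_top_of_le_ne_top (by simp [Complex.volume_ball]) (measure_mono (Set.sdiff_subset : _ ⊆ Metric.ball (0:ℂ) 1)))
  rw [measureReal_sdiff (Metric.ball_subset_ball (by linarith)) measurableSet_ball, vol_ball_real _ zero_le_one, vol_ball_real _ (by linarith)] at h2
  nlinarith [pi_pos, sq_nonneg ℓ, mul_pos pi_pos hℓ]

/-- integrals over the disc split into cells and the layer -/
lemma split_int {ℓ : ℝ} (hℓ : 0 < ℓ) {S : Finset ℂ} (hS : IsLat ℓ S) {E : Type*} [NormedAddCommGroup E] [NormedSpace ℝ E]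
    {f : ℂ → E} (hf : IntegrableOn f (Metric.ball 0 1)) :
    ∫ w in Metric.ball (0:ℂ) 1, f w = (∑ p ∈ S, ∫ w in cell ℓ p, f w) + ∫ w in layer ℓ S, f w := by
  have hu : (⋃ p ∈ S, cell ℓ p) ⊆ Metric.ball 0 1 := by
    intro w hw
    simp only [Set.mem_iUnion] at hw
    obtain ⟨p, hp, hw⟩ := hw
    exact cell_in hℓ hS hp hw
  rw [← integral_biUnion_finset S (fun p _ => cell_meas ℓ p) (cell_disj hℓ hS)
    (fun p hp => hf.mono_set (cell_in hℓ hS hp))]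
  unfold layer
  rw [← setIntegral_union Set.disjoint_sdiff_right (layer_meas ℓ S) (hf.mono_set hu) (hf.mono_set layer_sub)]
  congr 2
  rw [Set.union_sdiff_cancel hu]

lemma card_bound {ℓ : ℝ} (hℓ : 0 < ℓ) {S : Finset ℂ} (hS : IsLat ℓ S) : (S.card : ℝ) * ℓ ^ 2 ≤ π := by
  have hc : IntegrableOn (fun _ : ℂ => (1:ℝ)) (Metric.ball (0:ℂ) 1) := integrableOn_const (by simp [Complex.volume_ball])
  have := split_int hℓ hS hc
  simp only [setIntegral_const, smul_eq_mul, mul_one, cell_vol hℓ, vol_ball_real 0 zero_le_one, Finset.sum_const, nsmul_eq_mul] at this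
  have h0 : 0 ≤ (volume : Measure ℂ).real (layer ℓ S) := measureReal_nonneg
  linarith


/-- combined kernel -/
def kern (ℓ y : ℝ) : ℝ := 4 / ℓ ^ 2 * kA (2 * ℓ) y + 4 * kC ℓ y

lemma kern_nonneg {ℓ : ℝ} (hℓ : 0 < ℓ) (y : ℝ) : 0 ≤ kern ℓ y := by
  have h1 := kA_nonneg (2 * ℓ) y
  have h2 := kC_nonneg hℓ y
  unfold kern; positivity

lemma kern_int {ℓ : ℝ} (hℓ : 0 < ℓ) (z : ℂ) : Integrable (fun w : ℂ => kern ℓ ‖z - w‖) :=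
  ((kA_int _ z).const_mul _).add ((kC_int hℓ z).const_mul _)

lemma kern_val {ℓ : ℝ} (hℓ : 0 < ℓ) (z : ℂ) : ∫ w : ℂ, kern ℓ ‖z - w‖ = 24 * π / ℓ := by
  unfold kern
  rw [integral_add ((kA_int _ z).const_mul _) ((kC_int hℓ z).const_mul _), integral_const_mul, integral_const_mul,
    kA_val (by positivity), kC_val hℓ]
  field_simp
  ring

lemma kern_near {ℓ y : ℝ} (hℓ : 0 < ℓ) (hy : 0 ≤ y) (h : y < 2 * ℓ) : 4 / ℓ ^ 2 * y⁻¹ ≤ kern ℓ y := by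
  rw [inv_eq_kA hy h]
  have h2 := kC_nonneg hℓ y
  unfold kern; linarith

lemma kern_far {ℓ y : ℝ} (hℓ : 0 < ℓ) (h : ℓ < y) : 4 * (y ^ 3)⁻¹ ≤ kern ℓ y := by
  have h1 := kA_nonneg (2 * ℓ) y
  have : kC ℓ y = (y ^ 3)⁻¹ := by
    have hy : 0 < y := hℓ.trans h
    simp only [kC, Set.indicator, Set.mem_Ioi, h, if_true]
    rw [Real.rpow_neg hy.le]; norm_cast
  rw [← this]
  unfold kern
  have : 0 ≤ 4 / ℓ ^ 2 * kA (2 * ℓ) y := by positivity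
  linarith

lemma cell_cauchy_int {ℓ : ℝ} (hℓ : 0 < ℓ) (z p : ℂ) : IntegrableOn (fun w => (z - w)⁻¹) (cell ℓ p) := by
  apply cauchy_int (R := ‖z - p‖ + ℓ) (cell_meas ℓ p)
  intro w hw
  have := cell_ball hℓ p hw
  rw [Metric.mem_ball, dist_eq_norm] at *
  have h : w - z = (w - p) - (z - p) := by ring
  rw [h]
  linarith [norm_sub_le (w - p) (z - p)]

lemma cell_err {ℓ : ℝ} (hℓ : 0 < ℓ) {z p : ℂ} (hz : z ≠ p) :
    ‖(z - p)⁻¹ - ((ℓ ^ 2 : ℝ) : ℂ)⁻¹ * ∫ w in cell ℓ p, (z - w)⁻¹‖ ≤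
      kA (ℓ / 2) ‖z - p‖ + ∫ w in cell ℓ p, kern ℓ ‖z - w‖ := by
  have hi := cell_cauchy_int hℓ z p
  have hzp : z - p ≠ 0 := sub_ne_zero.mpr hz
  have hL : 0 < ℓ ^ 2 := by positivity
  have hLc : ((ℓ ^ 2 : ℝ) : ℂ) ≠ 0 := by exact_mod_cast hL.ne'
  have htri : ∀ w ∈ cell ℓ p, ‖z - w‖ ≤ ‖z - p‖ + 71 / 100 * ℓ := by
    intro w hw
    have h : z - w = (z - p) - (w - p) := by ring
    rw [h]
    linarith [norm_sub_le (z - p) (w - p), cell_norm' hℓ hw]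
  by_cases hn : ‖z - p‖ < ℓ / 2
  · rw [← inv_eq_kA (norm_nonneg _) hn, ← norm_inv]
    refine (norm_sub_le _ _).trans ?_
    gcongr
    rw [norm_mul, norm_inv, Complex.norm_real, Real.norm_of_nonneg hL.le]
    refine (mul_le_mul_of_nonneg_left (norm_integral_le_integral_norm _) (by positivity)).trans ?_
    rw [← integral_const_mul]
    apply setIntegral_mono_on (hi.norm.const_mul _) (kern_int hℓ z).integrableOn (cell_meas ℓ p)
    intro w hw
    have h1 := kern_near hℓ (norm_nonneg (z - w)) (by linarith [htri w hw])
    rw [norm_inv]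
    refine le_trans ?_ h1
    have : 0 ≤ ‖z - w‖⁻¹ := by positivity
    have h4 : 0 ≤ (ℓ ^ 2)⁻¹ := by positivity
    rw [div_eq_mul_inv]
    nlinarith [mul_nonneg this h4]
  · push Not at hn
    have hzn : 0 < ‖z - p‖ := norm_pos_iff.mpr hzp
    have key : (z - p)⁻¹ - ((ℓ ^ 2 : ℝ) : ℂ)⁻¹ * ∫ w in cell ℓ p, (z - w)⁻¹ =
       - ∫ w in cell ℓ p, ((ℓ ^ 2 : ℝ) : ℂ)⁻¹ * ((z - w)⁻¹ - (z - p)⁻¹ - ((z - p) ^ 2)⁻¹ * (w - p)) := by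
      rw [integral_const_mul, integral_sub, integral_sub hi (cell_cont_int hℓ p (by fun_prop)), integral_const_mul, cell_center hℓ,
        setIntegral_const, cell_vol hℓ]
      · rw [Complex.real_smul]; field_simp; ring
      · exact hi.sub (cell_cont_int hℓ p (by fun_prop))
      · exact cell_cont_int hℓ p (by fun_prop)
    rw [key, norm_neg]
    have h0 := kA_nonneg (ℓ / 2) ‖z - p‖
    refine le_trans (norm_integral_le_of_norm_le (kern_int hℓ z).integrableOn ?_) (le_add_of_nonneg_left h0)
    have hne : ∀ᵐ w ∂((volume : Measure ℂ).restrict (cell ℓ p)), w ≠ z := by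
      apply ae_restrict_of_ae
      simp [ae_iff]
    filter_upwards [ae_restrict_mem (cell_meas ℓ p), hne] with w hw hwz
    have hzw : z - w ≠ 0 := sub_ne_zero.mpr (Ne.symm hwz)
    have hzwn : 0 < ‖z - w‖ := norm_pos_iff.mpr hzw
    have e1 : (z - w)⁻¹ - (z - p)⁻¹ - ((z - p) ^ 2)⁻¹ * (w - p) = (w - p) ^ 2 * (((z - p) ^ 2)⁻¹ * (z - w)⁻¹) := by
      field_simp; ring
    rw [e1, norm_mul, norm_mul, norm_mul, norm_inv, norm_inv, norm_inv, norm_pow, norm_pow, Complex.norm_real, Real.norm_of_nonneg hL.le]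
    have hw2 := cell_norm hw
    have e2 : (ℓ ^ 2)⁻¹ * (‖w - p‖ ^ 2 * ((‖z - p‖ ^ 2)⁻¹ * ‖z - w‖⁻¹)) ≤ 1 / 2 * ((‖z - p‖ ^ 2)⁻¹ * ‖z - w‖⁻¹) := by
      rw [← mul_assoc]
      gcongr
      rw [inv_mul_le_iff₀ hL]; linarith
    refine e2.trans ?_
    by_cases hw3 : ‖z - w‖ < 2 * ℓ
    · refine le_trans ?_ (kern_near hℓ hzwn.le hw3)
      rw [← mul_assoc]
      gcongr
      have : (‖z - p‖ ^ 2)⁻¹ ≤ ((ℓ / 2) ^ 2)⁻¹ := by gcongr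
      have h5 : ((ℓ / 2) ^ 2)⁻¹ = 4 / ℓ ^ 2 := by field_simp; norm_num
      have h6 : 0 < 4 / ℓ ^ 2 := by positivity
      linarith
    · push Not at hw3
      refine le_trans ?_ (kern_far hℓ (by linarith))
      have h7 : ‖z - w‖ ^ 2 ≤ 8 * ‖z - p‖ ^ 2 := by
        have := htri w hw
        nlinarith
      have h8 : (‖z - p‖ ^ 2)⁻¹ ≤ 8 * (‖z - w‖ ^ 2)⁻¹ := by
        rw [inv_le_iff_one_le_mul₀ (by positivity)]
        have h9 : ‖z - w‖ ^ 2 * (‖z - w‖ ^ 2)⁻¹ = 1 := mul_inv_cancel₀ (by positivity)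
        have : 0 ≤ (‖z - w‖ ^ 2)⁻¹ := by positivity
        nlinarith
      calc 1 / 2 * ((‖z - p‖ ^ 2)⁻¹ * ‖z - w‖⁻¹) ≤ 1 / 2 * (8 * (‖z - w‖ ^ 2)⁻¹ * ‖z - w‖⁻¹) := by gcongr
        _ = 4 * (‖z - w‖ ^ 3)⁻¹ := by field_simp; norm_num

/-- cell part of the error -/
lemma E1_bound {ℓ : ℝ} (hℓ : 0 < ℓ) {S : Finset ℂ} (hS : IsLat ℓ S) {z : ℂ} (hz : z ∉ S) :
    ‖∑ p ∈ S, ((z - p)⁻¹ - ((ℓ ^ 2 : ℝ) : ℂ)⁻¹ * ∫ w in cell ℓ p, (z - w)⁻¹)‖ ≤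
      24 * π / ℓ + ∑ p ∈ S, kA (ℓ / 2) ‖z - p‖ := by
  refine (norm_sum_le _ _).trans ?_
  refine (Finset.sum_le_sum (fun p hp => cell_err hℓ (z := z) (p := p) (by rintro rfl; exact hz hp))).trans ?_
  rw [Finset.sum_add_distrib, add_comm]
  gcongr
  rw [← integral_biUnion_finset S (fun p _ => cell_meas ℓ p) (cell_disj hℓ hS)
    (fun p _ => (kern_int hℓ z).integrableOn), ← kern_val hℓ z]
  exact setIntegral_le_integral (kern_int hℓ z) (Eventually.of_forall (fun w => kern_nonneg hℓ _))

lemma lat_sep {ℓ : ℝ} (hℓ : 0 < ℓ) {S : Finset ℂ} (hS : IsLat ℓ S) {p q : ℂ} (hp : p ∈ S) (hq : q ∈ S)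
    (hne : p ≠ q) : ℓ ≤ ‖p - q‖ := by
  obtain ⟨⟨m, n, hm, hn⟩, -⟩ := (hS p).1 hp
  obtain ⟨⟨m', n', hm', hn'⟩, -⟩ := (hS q).1 hq
  have aux : ∀ a b : ℤ, a ≠ b → ℓ ≤ |(a * ℓ - b * ℓ : ℝ)| := by
    intro a b hab
    rw [← sub_mul, abs_mul, abs_of_pos hℓ]
    have : (1:ℝ) ≤ |((a - b : ℤ) : ℝ)| := by
      exact_mod_cast Int.one_le_abs (sub_ne_zero.mpr hab)
    push_cast at this
    nlinarith
  by_cases h1 : m = m'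
  · have h2 : n ≠ n' := by
      rintro rfl
      apply hne
      apply Complex.ext
      · rw [hm, hm', h1]
      · rw [hn, hn']
    have := aux n n' h2
    rw [← hn, ← hn', ← Complex.sub_im] at this
    exact this.trans (Complex.abs_im_le_norm _)
  · have := aux m m' h1
    rw [← hm, ← hm', ← Complex.sub_re] at this
    exact this.trans (Complex.abs_re_le_norm _)

lemma sum_kA_sq {ℓ : ℝ} (hℓ : 0 < ℓ) (hℓ1 : ℓ ≤ 1) {S : Finset ℂ} (hS : IsLat ℓ S) {z : ℂ} {ρ : ℝ}
    (hz : ∀ p ∈ S, ρ ≤ ‖p - z‖) :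
    (∑ p ∈ S, kA (ℓ / 2) ‖z - p‖) ^ 2 ≤ ∑ p ∈ S, kB ρ 1 ‖p - z‖ := by
  have hone : ∀ p ∈ S, (kA (ℓ / 2) ‖z - p‖) ^ 2 ≤ kB ρ 1 ‖p - z‖ := by
    intro p hp
    rw [norm_sub_rev z p]
    by_cases h : ‖p - z‖ ∈ Set.Ioo 0 (ℓ / 2)
    · have h' : ‖p - z‖ ∈ Set.Ico ρ 1 := ⟨hz p hp, by linarith [h.2]⟩
      rw [kA, kB, Set.indicator_of_mem h, Set.indicator_of_mem h', inv_pow]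
    · rw [kA, Set.indicator_of_notMem h]
      simpa using kB_nonneg _ _ _
  by_cases h : ∀ p ∈ S, kA (ℓ / 2) ‖z - p‖ = 0
  · rw [Finset.sum_eq_zero h]
    simpa using Finset.sum_nonneg (fun p _ => kB_nonneg _ _ _)
  · push Not at h
    obtain ⟨q, hq, hq0⟩ := h
    have hmem : ∀ p, kA (ℓ / 2) ‖z - p‖ ≠ 0 → ‖z - p‖ < ℓ / 2 := by
      intro p hp
      exact (Set.mem_of_indicator_ne_zero hp).2
    rw [Finset.sum_eq_single_of_mem q hq]
    · refine (hone q hq).trans ?_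
      exact Finset.single_le_sum (f := fun p => kB ρ 1 ‖p - z‖) (fun p _ => kB_nonneg _ _ _) hq
    · intro p hp hpq
      by_contra hc
      have h1 := hmem p hc
      have h2 := hmem q hq0
      have h3 := lat_sep hℓ hS hp hq hpq
      have h4 : p - q = (z - q) - (z - p) := by ring
      rw [h4] at h3
      linarith [norm_sub_le (z - q) (z - p)]

/-- kernel `1/y` on `[ℓ,2)` -/
def kJ (ℓ y : ℝ) : ℝ := (Set.Ico ℓ 2).indicator (fun y => y⁻¹) y

lemma kJ_sq (ℓ y : ℝ) : kJ ℓ y ^ 2 = kB ℓ 2 y := by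
  unfold kJ kB
  by_cases h : y ∈ Set.Ico ℓ 2 <;> simp [h]

lemma kJ_meas (ℓ : ℝ) : Measurable (kJ ℓ) := measurable_inv.indicator measurableSet_Ico
lemma kB_meas (ρ R : ℝ) : Measurable (kB ρ R) := (by fun_prop : Measurable (fun y : ℝ => (y ^ 2)⁻¹)).indicator measurableSet_Ico

lemma kJ_bound {ℓ : ℝ} (hℓ : 0 < ℓ) (y : ℝ) : ‖kJ ℓ y‖ ≤ ℓ⁻¹ := by
  unfold kJ
  by_cases h : y ∈ Set.Ico ℓ 2
  · rw [Set.indicator_of_mem h, norm_inv, Real.norm_of_nonneg (hℓ.le.trans h.1)]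
    exact inv_anti₀ hℓ h.1
  · simp [h, hℓ.le]

lemma kB_bound {ℓ : ℝ} (hℓ : 0 < ℓ) (y : ℝ) : ‖kB ℓ 2 y‖ ≤ ℓ⁻¹ ^ 2 := by
  rw [← kJ_sq, norm_pow]
  gcongr
  exact kJ_bound hℓ y

lemma cs {A : Set ℂ} (hA : volume A ≠ ⊤) {f : ℂ → ℝ} (hf : IntegrableOn f A) (hf2 : IntegrableOn (fun w => f w ^ 2) A) :
    (∫ w in A, f w) ^ 2 ≤ (volume : Measure ℂ).real A * ∫ w in A, f w ^ 2 := by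
  have key : ∀ t : ℝ, 0 ≤ ((volume : Measure ℂ).real A) * (t * t) + (-2 * ∫ w in A, f w) * t + ∫ w in A, f w ^ 2 := by
    intro t
    have h0 : 0 ≤ ∫ w in A, (f w - t) ^ 2 := integral_nonneg (fun w => sq_nonneg _)
    have e : ∀ w, (f w - t) ^ 2 = f w ^ 2 - (2 * t) * f w + t ^ 2 := fun w => by ring
    simp_rw [e] at h0
    have hsub : IntegrableOn (fun w => f w ^ 2 - (2 * t) * f w) A := hf2.sub (hf.const_mul _)
    rw [integral_add hsub (integrableOn_const hA), integral_sub hf2 (hf.const_mul _), integral_const_mul, setIntegral_const, smul_eq_mul] at h0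
    linarith
  have := discrim_le_zero key
  unfold discrim at this
  nlinarith

lemma E2_bound {ℓ : ℝ} (hℓ : 0 < ℓ) {A : Set ℂ} (hAm : MeasurableSet A) (hA : A ⊆ Metric.ball 0 1) {z : ℂ} (hz : ‖z‖ < 1) :
    ‖∫ w in A, (z - w)⁻¹‖ ^ 2 ≤ 2 * (2 * π * ℓ) ^ 2 +
      2 * ((volume : Measure ℂ).real A * ∫ w in A, kB ℓ 2 ‖z - w‖) := by
  have hAf : volume A ≠ ⊤ := ne_top_of_le_ne_top measure_ball_lt_top.ne (measure_mono hA)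
  have hJ : IntegrableOn (fun w => kJ ℓ ‖z - w‖) A := by
    apply Integrable.mono' (g := fun _ => ℓ⁻¹) (integrableOn_const hAf)
    · exact ((kJ_meas ℓ).comp (by fun_prop)).aestronglyMeasurable
    · exact Eventually.of_forall (fun w => kJ_bound hℓ _)
  have hJ2 : IntegrableOn (fun w => kJ ℓ ‖z - w‖ ^ 2) A := by
    simp_rw [kJ_sq]
    exact (kB_int hℓ z).integrableOn
  have h1 : ‖∫ w in A, (z - w)⁻¹‖ ≤ ∫ w in A, (kA ℓ ‖z - w‖ + kJ ℓ ‖z - w‖) := by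
    apply norm_integral_le_of_norm_le ((kA_int ℓ z).integrableOn.add hJ)
    filter_upwards [ae_restrict_mem hAm] with w hw
    have h2 := unit_ball_sub hz (hA hw)
    rw [Metric.mem_ball, dist_comm, dist_eq_norm] at h2
    rw [norm_inv]
    show _ ≤ kA ℓ ‖z - w‖ + kJ ℓ ‖z - w‖
    by_cases h3 : ‖z - w‖ < ℓ
    · rw [inv_eq_kA (norm_nonneg _) h3]
      apply le_add_of_nonneg_right
      unfold kJ
      apply Set.indicator_nonneg
      intro y hy; exact inv_nonneg.mpr (hℓ.le.trans hy.1)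
    · have : kJ ℓ ‖z - w‖ = ‖z - w‖⁻¹ := by
        unfold kJ; rw [Set.indicator_of_mem]; exact ⟨not_lt.mp h3, h2⟩
      rw [this]
      exact le_add_of_nonneg_left (kA_nonneg _ _)
  rw [integral_add (kA_int ℓ z).integrableOn hJ] at h1
  have h2 : ∫ w in A, kA ℓ ‖z - w‖ ≤ 2 * π * ℓ := by
    rw [← kA_val hℓ.le z]
    exact setIntegral_le_integral (kA_int ℓ z) (Eventually.of_forall (fun w => kA_nonneg _ _))
  have h3 := cs hAf hJ hJ2
  simp_rw [kJ_sq] at h3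
  have h4 : ‖∫ w in A, (z - w)⁻¹‖ ≤ 2 * π * ℓ + ∫ w in A, kJ ℓ ‖z - w‖ := by linarith
  have h5 : ‖∫ w in A, (z - w)⁻¹‖ ^ 2 ≤ (2 * π * ℓ + ∫ w in A, kJ ℓ ‖z - w‖) ^ 2 := by gcongr
  nlinarith [sq_nonneg (2 * π * ℓ - ∫ w in A, kJ ℓ ‖z - w‖)]

lemma E2_prod_int {ℓ : ℝ} (hℓ : 0 < ℓ) {A : Set ℂ} (hA : A ⊆ Metric.ball 0 1) :
    Integrable (Function.uncurry fun z w : ℂ => kB ℓ 2 ‖z - w‖)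
      (((volume : Measure ℂ).restrict (Metric.ball 0 1)).prod ((volume : Measure ℂ).restrict A)) := by
  have hAf : volume A < ⊤ := lt_of_le_of_lt (measure_mono hA) measure_ball_lt_top
  have : IsFiniteMeasure ((volume : Measure ℂ).restrict A) := ⟨by simpa using hAf⟩
  have : IsFiniteMeasure ((volume : Measure ℂ).restrict (Metric.ball 0 1)) := ⟨by simp [measure_ball_lt_top]⟩
  apply Integrable.mono' (g := fun _ => ℓ⁻¹ ^ 2) (integrable_const _)
  · exact ((kB_meas ℓ 2).comp (by fun_prop : Measurable fun q : ℂ × ℂ => ‖q.1 - q.2‖)).aestronglyMeasurable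
  · exact Eventually.of_forall (fun w => kB_bound hℓ _)

lemma E2_double {ℓ : ℝ} (hℓ : 0 < ℓ) (hℓ1 : ℓ ≤ 1) {A : Set ℂ} (hA : A ⊆ Metric.ball 0 1) :
    IntegrableOn (fun z => ∫ w in A, kB ℓ 2 ‖z - w‖) (Metric.ball 0 1) ∧
    ∫ z in Metric.ball (0:ℂ) 1, ∫ w in A, kB ℓ 2 ‖z - w‖ ≤ (volume : Measure ℂ).real A * (2 * π * Real.log (2 / ℓ)) := by
  have hp := E2_prod_int hℓ hA
  have hAf : volume A ≠ ⊤ := ne_top_of_le_ne_top measure_ball_lt_top.ne (measure_mono hA)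
  refine ⟨hp.integral_prod_left, ?_⟩
  rw [integral_integral_swap hp]
  have : (volume : Measure ℂ).real A * (2 * π * Real.log (2 / ℓ)) = ∫ w in A, (2 * π * Real.log (2 / ℓ)) := by
    rw [setIntegral_const, smul_eq_mul]
  rw [this]
  apply integral_mono hp.integral_prod_right (integrableOn_const hAf)
  intro w
  show ∫ z in Metric.ball (0:ℂ) 1, kB ℓ 2 ‖z - w‖ ≤ _
  have hrev : (fun z : ℂ => kB ℓ 2 ‖z - w‖) = fun z => kB ℓ 2 ‖w - z‖ := by
    ext z; rw [norm_sub_rev]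
  rw [hrev]
  rw [← kB_val hℓ (by linarith) w]
  exact setIntegral_le_integral (kB_int hℓ w) (Eventually.of_forall (fun w => kB_nonneg _ _ _))


/-- the deviation field -/
def Efld (ℓ : ℝ) (S : Finset ℂ) (z : ℂ) : ℂ :=
  (∑ p ∈ S, (z - p)⁻¹) - ((π / ℓ ^ 2 : ℝ) : ℂ) * (starRingEnd ℂ) z

/-- the perforated disc -/
def perf (S : Finset ℂ) (ρ : ℝ) : Set ℂ := Metric.ball 0 1 \ ⋃ p ∈ S, Metric.ball p ρ

lemma holes_meas (S : Finset ℂ) (ρ : ℝ) : MeasurableSet (⋃ p ∈ S, Metric.ball p ρ) :=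
  Finset.measurableSet_biUnion S (fun _ _ => measurableSet_ball)

lemma perf_meas (S : Finset ℂ) (ρ : ℝ) : MeasurableSet (perf S ρ) :=
  measurableSet_ball.diff (holes_meas S ρ)

lemma perf_sub (S : Finset ℂ) (ρ : ℝ) : perf S ρ ⊆ Metric.ball 0 1 := Set.sdiff_subset

lemma perf_norm {S : Finset ℂ} {ρ : ℝ} {z : ℂ} (hz : z ∈ perf S ρ) : ∀ p ∈ S, ρ ≤ ‖p - z‖ := by
  intro p hp
  by_contra hc
  push Not at hc
  apply hz.2
  apply Set.mem_biUnion hp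
  rw [Metric.mem_ball, dist_comm, dist_eq_norm]; exact hc

lemma E_decomp {ℓ : ℝ} (hℓ : 0 < ℓ) {S : Finset ℂ} (hS : IsLat ℓ S) {z : ℂ} (hz : ‖z‖ < 1) :
    Efld ℓ S z = (∑ p ∈ S, ((z - p)⁻¹ - ((ℓ ^ 2 : ℝ) : ℂ)⁻¹ * ∫ w in cell ℓ p, (z - w)⁻¹))
      - ((ℓ ^ 2 : ℝ) : ℂ)⁻¹ * ∫ w in layer ℓ S, (z - w)⁻¹ := by
  have h := split_int hℓ hS (cauchy_int (z := z) measurableSet_ball (unit_ball_sub hz))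
  rw [newton hz] at h
  have h2 : ((π / ℓ ^ 2 : ℝ) : ℂ) * (starRingEnd ℂ) z = ((ℓ ^ 2 : ℝ) : ℂ)⁻¹ * (π * (starRingEnd ℂ) z) := by
    push_cast; ring
  rw [Efld, h2, h, Finset.sum_sub_distrib, mul_add, Finset.mul_sum]
  ring

/-- pointwise majorant of `‖E‖²` -/
def Gmaj (ℓ ρ : ℝ) (S : Finset ℂ) (z : ℂ) : ℝ :=
  2320 * π ^ 2 / ℓ ^ 2 + 4 * ∑ p ∈ S, kB ρ 1 ‖p - z‖ +
    4 / ℓ ^ 4 * (volume : Measure ℂ).real (layer ℓ S) * ∫ w in layer ℓ S, kB ℓ 2 ‖z - w‖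

lemma Gmaj_nonneg (ℓ ρ : ℝ) (S : Finset ℂ) (z : ℂ) : 0 ≤ Gmaj ℓ ρ S z := by
  have h1 : 0 ≤ ∑ p ∈ S, kB ρ 1 ‖p - z‖ := Finset.sum_nonneg (fun _ _ => kB_nonneg _ _ _)
  have h2 : 0 ≤ ∫ w in layer ℓ S, kB ℓ 2 ‖z - w‖ := integral_nonneg (fun _ => kB_nonneg _ _ _)
  unfold Gmaj; positivity

lemma E_sq {ℓ ρ : ℝ} (hℓ : 0 < ℓ) (hℓ1 : ℓ ≤ 1) (hρ : 0 < ρ) {S : Finset ℂ} (hS : IsLat ℓ S) {z : ℂ} (hz : z ∈ perf S ρ) :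
    ‖Efld ℓ S z‖ ^ 2 ≤ Gmaj ℓ ρ S z := by
  have hz1 : ‖z‖ < 1 := by simpa using perf_sub S ρ hz
  have hzS : z ∉ S := by
    intro h
    have := perf_norm hz z h
    simp at this; linarith
  rw [E_decomp hℓ hS hz1]
  set a := ∑ p ∈ S, ((z - p)⁻¹ - ((ℓ ^ 2 : ℝ) : ℂ)⁻¹ * ∫ w in cell ℓ p, (z - w)⁻¹)
  set b := ∫ w in layer ℓ S, (z - w)⁻¹
  have h1 : ‖a‖ ≤ 24 * π / ℓ + ∑ p ∈ S, kA (ℓ / 2) ‖z - p‖ := E1_bound hℓ hS hzS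
  have h2 := sum_kA_sq hℓ hℓ1 hS (perf_norm hz)
  have h3 : ‖b‖ ^ 2 ≤ _ := E2_bound hℓ (layer_meas ℓ S) layer_sub hz1
  unfold Gmaj
  set s := ∑ p ∈ S, kA (ℓ / 2) ‖z - p‖
  set t := ∑ p ∈ S, kB ρ 1 ‖p - z‖
  set K := ∫ w in layer ℓ S, kB ℓ 2 ‖z - w‖
  set v := (volume : Measure ℂ).real (layer ℓ S)
  have h4 : ‖a - ((ℓ ^ 2 : ℝ) : ℂ)⁻¹ * b‖ ≤ ‖a‖ + (ℓ ^ 2)⁻¹ * ‖b‖ := by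
    refine (norm_sub_le _ _).trans ?_
    rw [norm_mul, norm_inv, Complex.norm_real, Real.norm_of_nonneg (by positivity)]
  have h5 : ‖a - ((ℓ ^ 2 : ℝ) : ℂ)⁻¹ * b‖ ^ 2 ≤ 2 * ‖a‖ ^ 2 + 2 * ((ℓ ^ 2)⁻¹ * ‖b‖) ^ 2 := by
    have : ‖a - ((ℓ ^ 2 : ℝ) : ℂ)⁻¹ * b‖ ^ 2 ≤ (‖a‖ + (ℓ ^ 2)⁻¹ * ‖b‖) ^ 2 := by gcongr
    nlinarith [sq_nonneg (‖a‖ - (ℓ ^ 2)⁻¹ * ‖b‖)]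
  have h6 : ‖a‖ ^ 2 ≤ 2 * (24 * π / ℓ) ^ 2 + 2 * t := by
    have : ‖a‖ ^ 2 ≤ (24 * π / ℓ + s) ^ 2 := by gcongr
    nlinarith [sq_nonneg (24 * π / ℓ - s)]
  have h7 : ((ℓ ^ 2)⁻¹ * ‖b‖) ^ 2 ≤ ((ℓ ^ 2)⁻¹) ^ 2 * (2 * (2 * π * ℓ) ^ 2 + 2 * (v * K)) := by
    rw [mul_pow]; gcongr
  have h8 : 2 * (2 * (24 * π / ℓ) ^ 2 + 2 * t) + 2 * (((ℓ ^ 2)⁻¹) ^ 2 * (2 * (2 * π * ℓ) ^ 2 + 2 * (v * K))) =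
    2320 * π ^ 2 / ℓ ^ 2 + 4 * t + 4 / ℓ ^ 4 * v * K := by
    field_simp; ring
  linarith

lemma Gmaj_int {ℓ ρ : ℝ} (hℓ : 0 < ℓ) (hℓ1 : 4 * ℓ < 1) (hρ : 0 < ρ) (hρ1 : ρ ≤ 1) {S : Finset ℂ} (hS : IsLat ℓ S) :
    IntegrableOn (Gmaj ℓ ρ S) (Metric.ball 0 1) ∧
    ∫ z in Metric.ball (0:ℂ) 1, Gmaj ℓ ρ S z ≤
      (2320 * π ^ 3 + 8 * π ^ 2 * Real.log (1 / ρ) + 512 * π ^ 3 * Real.log (2 / ℓ)) / ℓ ^ 2 := by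
  have hc : IntegrableOn (fun _ : ℂ => 2320 * π ^ 2 / ℓ ^ 2) (Metric.ball (0:ℂ) 1) := integrableOn_const measure_ball_lt_top.ne
  have hs : Integrable (fun z : ℂ => 4 * ∑ p ∈ S, kB ρ 1 ‖p - z‖) :=
    (integrable_finsetSum S (fun p _ => kB_int hρ p)).const_mul 4
  obtain ⟨hK, hKb⟩ := E2_double hℓ (by linarith : ℓ ≤ 1) (layer_sub (ℓ := ℓ) (S := S))
  have hK2 := hK.const_mul (4 / ℓ ^ 4 * (volume : Measure ℂ).real (layer ℓ S))
  have hcs : IntegrableOn (fun z : ℂ => 2320 * π ^ 2 / ℓ ^ 2 + 4 * ∑ p ∈ S, kB ρ 1 ‖p - z‖) (Metric.ball (0:ℂ) 1) := hc.add hs.integrableOn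
  refine ⟨hcs.add hK2, ?_⟩
  unfold Gmaj
  rw [integral_add hcs hK2, integral_add hc hs.integrableOn, setIntegral_const, vol_ball_real 0 zero_le_one, integral_const_mul (4 / ℓ ^ 4 * (volume : Measure ℂ).real (layer ℓ S))]
  have hN := card_bound hℓ hS
  have hv := layer_vol hℓ hℓ1 hS
  have hv0 : 0 ≤ (volume : Measure ℂ).real (layer ℓ S) := measureReal_nonneg
  have hlog : 0 ≤ Real.log (1 / ρ) := Real.log_nonneg (by rw [one_div]; exact (one_le_inv₀ hρ).mpr hρ1)
  have hlog2 : 0 ≤ Real.log (2 / ℓ) := Real.log_nonneg (by rw [le_div_iff₀ hℓ]; linarith)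
  have h1 : ∫ z in Metric.ball (0:ℂ) 1, 4 * ∑ p ∈ S, kB ρ 1 ‖p - z‖ ≤ 8 * π ^ 2 * Real.log (1 / ρ) / ℓ ^ 2 := by
    calc ∫ z in Metric.ball (0:ℂ) 1, 4 * ∑ p ∈ S, kB ρ 1 ‖p - z‖ ≤ ∫ z : ℂ, 4 * ∑ p ∈ S, kB ρ 1 ‖p - z‖ := by
          apply setIntegral_le_integral hs
          refine Eventually.of_forall (fun z => ?_)
          have h1 : 0 ≤ ∑ p ∈ S, kB ρ 1 ‖p - z‖ := Finset.sum_nonneg (fun _ _ => kB_nonneg _ _ _)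
          show 0 ≤ 4 * ∑ p ∈ S, kB ρ 1 ‖p - z‖
          positivity
      _ = 4 * (S.card * (2 * π * Real.log (1 / ρ))) := by
          rw [integral_const_mul, integral_finsetSum _ (fun p _ => kB_int hρ p)]
          simp_rw [kB_val hρ hρ1]
          simp
      _ ≤ _ := by
          rw [le_div_iff₀ (by positivity)]
          nlinarith [mul_nonneg (mul_nonneg (by norm_num : (0:ℝ) ≤ 8) pi_pos.le) hlog]
  have h2 : 4 / ℓ ^ 4 * (volume : Measure ℂ).real (layer ℓ S) * ∫ z in Metric.ball (0:ℂ) 1, ∫ w in layer ℓ S, kB ℓ 2 ‖z - w‖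
      ≤ 512 * π ^ 3 * Real.log (2 / ℓ) / ℓ ^ 2 := by
    set v := (volume : Measure ℂ).real (layer ℓ S)
    calc _ ≤ 4 / ℓ ^ 4 * v * (v * (2 * π * Real.log (2 / ℓ))) := by gcongr
      _ ≤ 4 / ℓ ^ 4 * (8 * π * ℓ) * ((8 * π * ℓ) * (2 * π * Real.log (2 / ℓ))) := by gcongr
      _ = _ := by field_simp; ring
  have h3 : (π * 1 ^ 2) • (2320 * π ^ 2 / ℓ ^ 2) = 2320 * π ^ 3 / ℓ ^ 2 := by
    rw [smul_eq_mul]; ring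
  rw [h3, add_div, add_div]
  linarith

/-- the lattice Riemann sum -/
lemma riemann {ℓ : ℝ} (hℓ : 0 < ℓ) (hℓ1 : 4 * ℓ < 1) {S : Finset ℂ} (hS : IsLat ℓ S) :
    |∑ p ∈ S, π * (1 - ‖p‖ ^ 2) - π / ℓ ^ 2 * (π / 2)| ≤ 65 * π ^ 2 := by
  have hcont : Continuous (fun w : ℂ => 1 - ‖w‖ ^ 2) := by fun_prop
  have hi : IntegrableOn (fun w : ℂ => 1 - ‖w‖ ^ 2) (Metric.ball 0 1) :=
    (hcont.continuousOn.integrableOn_compact (isCompact_closedBall 0 1)).mono_set Metric.ball_subset_closedBall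
  have hi2 : IntegrableOn (fun w : ℂ => ‖w‖ ^ 2) (Metric.ball 0 1) :=
    ((by fun_prop : Continuous (fun w : ℂ => ‖w‖ ^ 2)).continuousOn.integrableOn_compact (isCompact_closedBall 0 1)).mono_set Metric.ball_subset_closedBall
  have h := split_int hℓ hS hi
  have htot : ∫ w in Metric.ball (0:ℂ) 1, (1 - ‖w‖ ^ 2) = π / 2 := by
    have hc : IntegrableOn (fun _ : ℂ => (1:ℝ)) (Metric.ball (0:ℂ) 1) := integrableOn_const measure_ball_lt_top.ne
    rw [integral_sub hc hi2, disc_sq, setIntegral_const, vol_ball_real 0 zero_le_one]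
    simp; ring
  have hcell : ∀ p ∈ S, |ℓ ^ 2 * (1 - ‖p‖ ^ 2) - ∫ w in cell ℓ p, (1 - ‖w‖ ^ 2)| ≤ ℓ ^ 4 / 2 := by
    intro p hp
    have e : ∀ w : ℂ, (1 - ‖w‖ ^ 2) = (1 - ‖p‖ ^ 2) - 2 * ((starRingEnd ℂ) p * (w - p)).re - ‖w - p‖ ^ 2 := by
      intro w
      simp only [Complex.sq_norm, Complex.normSq_apply, Complex.mul_re, Complex.conj_re, Complex.conj_im, Complex.sub_re, Complex.sub_im]
      ring
    have i0 : IntegrableOn (fun w : ℂ => (1 - ‖p‖ ^ 2)) (cell ℓ p) := cell_cont_int hℓ p (by fun_prop)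
    have i1 : IntegrableOn (fun w : ℂ => (starRingEnd ℂ) p * (w - p)) (cell ℓ p) := cell_cont_int hℓ p (by fun_prop)
    have i2 : IntegrableOn (fun w : ℂ => 2 * ((starRingEnd ℂ) p * (w - p)).re) (cell ℓ p) := cell_cont_int hℓ p (by fun_prop)
    have i3 : IntegrableOn (fun w : ℂ => ‖w - p‖ ^ 2) (cell ℓ p) := cell_cont_int hℓ p (by fun_prop)
    have i4 : IntegrableOn (fun w : ℂ => (1 - ‖p‖ ^ 2) - 2 * ((starRingEnd ℂ) p * (w - p)).re) (cell ℓ p) := i0.sub i2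
    have hre : ∫ w in cell ℓ p, ((starRingEnd ℂ) p * (w - p)).re = 0 := by
      have := Complex.reCLM.integral_comp_comm i1
      simp only [Complex.reCLM_apply] at this
      rw [this, integral_const_mul, cell_center hℓ]; simp
    have hval : ∫ w in cell ℓ p, (1 - ‖w‖ ^ 2) = ℓ ^ 2 * (1 - ‖p‖ ^ 2) - ∫ w in cell ℓ p, ‖w - p‖ ^ 2 := by
      rw [integral_congr_ae (Eventually.of_forall e)]
      rw [integral_sub i4 i3, integral_sub i0 i2, integral_const_mul, hre, setIntegral_const, cell_vol hℓ]
      simp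
    rw [hval]
    have hq0 : 0 ≤ ∫ w in cell ℓ p, ‖w - p‖ ^ 2 := integral_nonneg (fun w => by positivity)
    have hq1 : ∫ w in cell ℓ p, ‖w - p‖ ^ 2 ≤ ∫ w in cell ℓ p, ℓ ^ 2 / 2 :=
      setIntegral_mono_on i3 (cell_cont_int hℓ p (by fun_prop)) (cell_meas ℓ p) (fun w hw => cell_norm hw)
    rw [setIntegral_const, cell_vol hℓ, smul_eq_mul] at hq1
    rw [abs_le]; constructor <;> nlinarith
  have hl0 : 0 ≤ ∫ w in layer ℓ S, (1 - ‖w‖ ^ 2) := by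
    apply setIntegral_nonneg (layer_meas ℓ S)
    intro w hw
    have : ‖w‖ < 1 := by simpa using layer_sub hw
    nlinarith [norm_nonneg w]
  have hfin : volume (layer ℓ S) ≠ ⊤ := ne_top_of_le_ne_top measure_ball_lt_top.ne (measure_mono (layer_sub (ℓ := ℓ) (S := S)))
  have hl1 : ∫ w in layer ℓ S, (1 - ‖w‖ ^ 2) ≤ 64 * π * ℓ ^ 2 := by
    calc _ ≤ ∫ w in layer ℓ S, 8 * ℓ := by
          apply setIntegral_mono_on (hi.mono_set layer_sub) (integrableOn_const hfin) (layer_meas ℓ S)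
          intro w hw
          have h1 : ‖w‖ < 1 := by simpa using layer_sub hw
          have h2 := layer_norm hℓ hS hw
          nlinarith [norm_nonneg w]
      _ ≤ _ := by
          rw [setIntegral_const, smul_eq_mul]
          nlinarith [layer_vol hℓ hℓ1 hS]
  have hN := card_bound hℓ hS
  have hsum : |∑ p ∈ S, (ℓ ^ 2 * (1 - ‖p‖ ^ 2) - ∫ w in cell ℓ p, (1 - ‖w‖ ^ 2))| ≤ S.card * (ℓ ^ 4 / 2) := by
    refine (Finset.abs_sum_le_sum_abs _ _).trans ?_
    refine (Finset.sum_le_sum hcell).trans ?_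
    simp
  rw [Finset.sum_sub_distrib, ← Finset.mul_sum] at hsum
  have hT : |ℓ ^ 2 * (∑ p ∈ S, (1 - ‖p‖ ^ 2)) - π / 2| ≤ 65 * π * ℓ ^ 2 := by
    have h5 : S.card * (ℓ ^ 4 / 2) ≤ π * ℓ ^ 2 / 2 := by nlinarith [sq_nonneg ℓ]
    rw [abs_le] at hsum ⊢
    have : 0 < π * ℓ ^ 2 := by positivity
    constructor <;> linarith [hsum.1, hsum.2]
  have hfac : ∑ p ∈ S, π * (1 - ‖p‖ ^ 2) - π / ℓ ^ 2 * (π / 2) = π / ℓ ^ 2 * (ℓ ^ 2 * (∑ p ∈ S, (1 - ‖p‖ ^ 2)) - π / 2) := by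
    rw [← Finset.mul_sum]; field_simp
  rw [hfac, abs_mul, abs_of_pos (by positivity : 0 < π / ℓ ^ 2)]
  calc _ ≤ π / ℓ ^ 2 * (65 * π * ℓ ^ 2) := by gcongr
    _ = _ := by field_simp


lemma lat_lt {ℓ : ℝ} (hℓ : 0 < ℓ) {S : Finset ℂ} (hS : IsLat ℓ S) {p : ℂ} (hp : p ∈ S) : ‖p‖ < 1 := by
  have := ((hS p).1 hp).2
  have h2 : 0 < 2 * √2 * ℓ := by positivity
  linarith

/-- the cross term -/
def Xfld (ℓ : ℝ) (S : Finset ℂ) (z : ℂ) : ℝ := (z * Efld ℓ S z).re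

lemma Xfld_eq (ℓ : ℝ) (S : Finset ℂ) (z : ℂ) :
    Xfld ℓ S z = (∑ p ∈ S, z * (z - p)⁻¹).re - π / ℓ ^ 2 * ‖z‖ ^ 2 := by
  have h : z * Efld ℓ S z = (∑ p ∈ S, z * (z - p)⁻¹) - ((π / ℓ ^ 2 * ‖z‖ ^ 2 : ℝ) : ℂ) := by
    rw [Efld, mul_sub, Finset.mul_sum]
    congr 1
    have : z * (starRingEnd ℂ) z = ((‖z‖ ^ 2 : ℝ) : ℂ) := by
      rw [Complex.mul_conj, Complex.normSq_eq_norm_sq]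
    rw [Complex.ofReal_mul, ← this]; ring
  rw [Xfld, h, Complex.sub_re, Complex.ofReal_re]

lemma nsq_int : IntegrableOn (fun w : ℂ => ‖w‖ ^ 2) (Metric.ball 0 1) :=
  ((by fun_prop : Continuous (fun w : ℂ => ‖w‖ ^ 2)).continuousOn.integrableOn_compact (isCompact_closedBall 0 1)).mono_set Metric.ball_subset_closedBall

lemma Xfld_int {ℓ : ℝ} (hℓ : 0 < ℓ) {S : Finset ℂ} (hS : IsLat ℓ S) :
    IntegrableOn (Xfld ℓ S) (Metric.ball 0 1) ∧
    ∫ z in Metric.ball (0:ℂ) 1, Xfld ℓ S z = ∑ p ∈ S, π * (1 - ‖p‖ ^ 2) - π / ℓ ^ 2 * (π / 2) := by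
  have hs : IntegrableOn (fun z : ℂ => ∑ p ∈ S, z * (z - p)⁻¹) (Metric.ball 0 1) :=
    integrable_finsetSum S (fun p hp => (vortex_moment (lat_lt hℓ hS hp)).1)
  have hre : IntegrableOn (fun z : ℂ => (∑ p ∈ S, z * (z - p)⁻¹).re) (Metric.ball 0 1) := hs.re
  have hn := nsq_int.const_mul (π / ℓ ^ 2)
  have e : Xfld ℓ S = fun z => (∑ p ∈ S, z * (z - p)⁻¹).re - π / ℓ ^ 2 * ‖z‖ ^ 2 := funext (Xfld_eq ℓ S)
  rw [e]
  refine ⟨hre.sub hn, ?_⟩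
  rw [integral_sub hre hn, integral_const_mul, disc_sq]
  have := Complex.reCLM.integral_comp_comm hs
  simp only [Complex.reCLM_apply] at this
  rw [this, integral_finsetSum _ (fun p hp => (vortex_moment (lat_lt hℓ hS hp)).1), Complex.re_sum]
  congr 1
  apply Finset.sum_congr rfl
  intro p hp
  rw [(vortex_moment (lat_lt hℓ hS hp)).2, Complex.ofReal_re]

lemma Xfld_le {ℓ ρ : ℝ} (hℓ : 0 < ℓ) (hρ : 0 < ρ) (S : Finset ℂ) {z : ℂ} (hz : ‖z‖ < 1) :
    |Xfld ℓ S z| ≤ (∑ p ∈ S, kA ρ ‖p - z‖) + (S.card * ρ⁻¹ + π / ℓ ^ 2) := by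
  have h1 : ∀ p ∈ S, ‖z * (z - p)⁻¹‖ ≤ kA ρ ‖p - z‖ + ρ⁻¹ := by
    intro p _
    rw [norm_mul, norm_inv, norm_sub_rev z p]
    have h2 : ‖z‖ * ‖p - z‖⁻¹ ≤ ‖p - z‖⁻¹ := mul_le_of_le_one_left (by positivity) hz.le
    rcases lt_or_ge ‖p - z‖ ρ with h | h
    · rw [← inv_eq_kA (norm_nonneg _) h]
      have : 0 < ρ⁻¹ := by positivity
      linarith
    · have := inv_anti₀ hρ h
      have := kA_nonneg ρ ‖p - z‖
      linarith
  have h3 : |(∑ p ∈ S, z * (z - p)⁻¹).re| ≤ ∑ p ∈ S, (kA ρ ‖p - z‖ + ρ⁻¹) :=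
    (Complex.abs_re_le_norm _).trans ((norm_sum_le _ _).trans (Finset.sum_le_sum h1))
  rw [Finset.sum_add_distrib, Finset.sum_const, nsmul_eq_mul] at h3
  rw [Xfld_eq]
  have h4 : |π / ℓ ^ 2 * ‖z‖ ^ 2| ≤ π / ℓ ^ 2 := by
    rw [abs_of_nonneg (by positivity)]
    apply mul_le_of_le_one_right (by positivity)
    nlinarith [norm_nonneg z]
  refine (abs_sub _ _).trans ?_
  linarith

lemma holes_int {ℓ ρ : ℝ} (hℓ : 0 < ℓ) (hℓ1 : ℓ ≤ 1) (hρ : 0 < ρ) (hρℓ : ρ ≤ ℓ ^ 4) {S : Finset ℂ} (hS : IsLat ℓ S) :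
    |∫ z in Metric.ball (0:ℂ) 1 ∩ ⋃ p ∈ S, Metric.ball p ρ, Xfld ℓ S z| ≤ 2 * π ^ 2 + 2 * π ^ 3 := by
  set H := Metric.ball (0:ℂ) 1 ∩ ⋃ p ∈ S, Metric.ball p ρ with hH
  have hHm : MeasurableSet H := measurableSet_ball.inter (holes_meas S ρ)
  have hHf : volume H ≠ ⊤ := ne_top_of_le_ne_top measure_ball_lt_top.ne (measure_mono Set.inter_subset_left)
  have hvol : (volume : Measure ℂ).real H ≤ S.card * (π * ρ ^ 2) := by
    have h1 : (volume : Measure ℂ).real H ≤ (volume : Measure ℂ).real (⋃ p ∈ S, Metric.ball p ρ) := by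
      refine measureReal_mono Set.inter_subset_right ?_
      exact ((measure_biUnion_finset_le S _).trans_lt (ENNReal.sum_lt_top.2 (fun p _ => measure_ball_lt_top))).ne
    refine h1.trans ((measureReal_biUnion_finset_le S _).trans ?_)
    simp_rw [vol_ball_real _ hρ.le]
    simp
  have hk : Integrable (fun z : ℂ => ∑ p ∈ S, kA ρ ‖p - z‖) := integrable_finsetSum S (fun p _ => kA_int ρ p)
  have hcI : IntegrableOn (fun _ : ℂ => (S.card * ρ⁻¹ + π / ℓ ^ 2 : ℝ)) H := integrableOn_const hHf
  have h1 : |∫ z in H, Xfld ℓ S z| ≤ ∫ z in H, ((∑ p ∈ S, kA ρ ‖p - z‖) + (S.card * ρ⁻¹ + π / ℓ ^ 2)) := by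
    rw [← Real.norm_eq_abs]
    apply norm_integral_le_of_norm_le (hk.integrableOn.add hcI)
    filter_upwards [ae_restrict_mem hHm] with z hz
    exact Xfld_le hℓ hρ S (by simpa using hz.1)
  rw [integral_add hk.integrableOn hcI, setIntegral_const, smul_eq_mul] at h1
  have h2 : ∫ z in H, ∑ p ∈ S, kA ρ ‖p - z‖ ≤ S.card * (2 * π * ρ) := by
    calc _ ≤ ∫ z : ℂ, ∑ p ∈ S, kA ρ ‖p - z‖ :=
          setIntegral_le_integral hk (Eventually.of_forall (fun z => Finset.sum_nonneg (fun _ _ => kA_nonneg _ _)))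
      _ = _ := by
          rw [integral_finsetSum _ (fun p _ => kA_int ρ p)]
          simp_rw [kA_val hρ.le]
          simp
  have hN : (S.card : ℝ) ≤ π / ℓ ^ 2 := by
    rw [le_div_iff₀ (by positivity)]; exact card_bound hℓ hS
  have h3 : (S.card : ℝ) * (2 * π * ρ) ≤ 2 * π ^ 2 := by
    calc _ ≤ π / ℓ ^ 2 * (2 * π * ℓ ^ 4) := by gcongr
      _ = 2 * π ^ 2 * ℓ ^ 2 := by field_simp
      _ ≤ _ := mul_le_of_le_one_right (by positivity) (pow_le_one₀ hℓ.le hℓ1)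
  have h4 : (volume : Measure ℂ).real H * (S.card * ρ⁻¹ + π / ℓ ^ 2) ≤ 2 * π ^ 3 := by
    calc _ ≤ S.card * (π * ρ ^ 2) * (S.card * ρ⁻¹ + π / ℓ ^ 2) := by gcongr
      _ = S.card * π * (S.card * ρ + π / ℓ ^ 2 * (ρ * ρ)) := by field_simp
      _ ≤ π / ℓ ^ 2 * π * (π / ℓ ^ 2 * ℓ ^ 4 + π / ℓ ^ 2 * (ℓ ^ 4 * 1)) := by
          have : ρ ≤ 1 := hρℓ.trans (pow_le_one₀ hℓ.le hℓ1)
          gcongr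
      _ = _ := by field_simp; ring
  linarith

lemma cross_bound {ℓ ρ : ℝ} (hℓ : 0 < ℓ) (hℓ1 : 4 * ℓ < 1) (hρ : 0 < ρ) (hρℓ : ρ ≤ ℓ ^ 4) {S : Finset ℂ} (hS : IsLat ℓ S) :
    |∫ z in perf S ρ, Xfld ℓ S z| ≤ 67 * π ^ 2 + 2 * π ^ 3 := by
  obtain ⟨hX, hXv⟩ := Xfld_int hℓ hS
  have h := integral_inter_add_sdiff (holes_meas S ρ) hX
  have h1 := holes_int hℓ (by linarith) hρ hρℓ hS
  have h2 := riemann hℓ hℓ1 hS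
  rw [← hXv, ← h] at h2
  change |_ + ∫ z in perf S ρ, Xfld ℓ S z| ≤ _ at h2
  rw [abs_le] at *
  constructor <;> linarith [h1.1, h1.2, h2.1, h2.2]

lemma main_C {ℓ ρ : ℝ} (a : ℝ) (hℓ : 0 < ℓ) (hℓ1 : 4 * ℓ < 1) (hρ : 0 < ρ) (hρℓ : ρ ≤ ℓ ^ 4) {S : Finset ℂ} (hS : IsLat ℓ S) :
    ∫ z in perf S ρ, ‖(∑ p ∈ S, (z - p)⁻¹) - (a : ℂ) * (starRingEnd ℂ) z‖ ^ 2 ≤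
      (π / ℓ ^ 2 - a) ^ 2 * (π / 2) + 2 * |π / ℓ ^ 2 - a| * (67 * π ^ 2 + 2 * π ^ 3) +
      (2320 * π ^ 3 + 8 * π ^ 2 * Real.log (1 / ρ) + 512 * π ^ 3 * Real.log (2 / ℓ)) / ℓ ^ 2 := by
  set c := π / ℓ ^ 2 - a with hc
  have hρ1 : ρ ≤ 1 := hρℓ.trans (pow_le_one₀ hℓ.le (by linarith))
  obtain ⟨hX, -⟩ := Xfld_int hℓ hS
  obtain ⟨hG, hGv⟩ := Gmaj_int hℓ hℓ1 hρ hρ1 hS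
  have i1 : IntegrableOn (fun z : ℂ => c ^ 2 * ‖z‖ ^ 2) (perf S ρ) := (nsq_int.mono_set (perf_sub S ρ)).const_mul _
  have i2 : IntegrableOn (fun z : ℂ => 2 * c * Xfld ℓ S z) (perf S ρ) := (hX.mono_set (perf_sub S ρ)).const_mul _
  have i3 : IntegrableOn (Gmaj ℓ ρ S) (perf S ρ) := hG.mono_set (perf_sub S ρ)
  have i12 : IntegrableOn (fun z : ℂ => c ^ 2 * ‖z‖ ^ 2 + 2 * c * Xfld ℓ S z) (perf S ρ) := i1.add i2
  have hpt : ∀ z ∈ perf S ρ, ‖(∑ p ∈ S, (z - p)⁻¹) - (a : ℂ) * (starRingEnd ℂ) z‖ ^ 2 ≤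
      c ^ 2 * ‖z‖ ^ 2 + 2 * c * Xfld ℓ S z + Gmaj ℓ ρ S z := by
    intro z hz
    have h1 := E_sq hℓ (by linarith) hρ hS hz
    have h2 : (∑ p ∈ S, (z - p)⁻¹) - (a : ℂ) * (starRingEnd ℂ) z = (c : ℂ) * (starRingEnd ℂ) z + Efld ℓ S z := by
      rw [Efld, hc]; push_cast; ring
    rw [h2]
    have h3 : ‖(c : ℂ) * (starRingEnd ℂ) z + Efld ℓ S z‖ ^ 2 = c ^ 2 * ‖z‖ ^ 2 + 2 * c * Xfld ℓ S z + ‖Efld ℓ S z‖ ^ 2 := by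
      rw [Xfld]
      generalize Efld ℓ S z = E
      simp only [Complex.sq_norm, Complex.normSq_apply, Complex.mul_re, Complex.mul_im, Complex.add_re, Complex.add_im, Complex.conj_re, Complex.conj_im, Complex.ofReal_re, Complex.ofReal_im]
      ring
    rw [h3]; linarith
  have hle : ∫ z in perf S ρ, ‖(∑ p ∈ S, (z - p)⁻¹) - (a : ℂ) * (starRingEnd ℂ) z‖ ^ 2 ≤
      ∫ z in perf S ρ, (c ^ 2 * ‖z‖ ^ 2 + 2 * c * Xfld ℓ S z + Gmaj ℓ ρ S z) := by
    apply integral_mono_of_nonneg (Eventually.of_forall (fun z => by positivity)) (i12.add i3)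
    filter_upwards [ae_restrict_mem (perf_meas S ρ)] with z hz
    exact hpt z hz
  rw [integral_add i12 i3, integral_add i1 i2, integral_const_mul, integral_const_mul] at hle
  have h1 : ∫ z in perf S ρ, ‖z‖ ^ 2 ≤ π / 2 := by
    rw [← disc_sq]
    exact setIntegral_mono_set nsq_int (Eventually.of_forall (fun z => by positivity)) (perf_sub S ρ).eventuallyLE
  have h2 : ∫ z in perf S ρ, Gmaj ℓ ρ S z ≤ ∫ z in Metric.ball (0:ℂ) 1, Gmaj ℓ ρ S z :=
    setIntegral_mono_set hG (Eventually.of_forall (fun z => Gmaj_nonneg ℓ ρ S z)) (perf_sub S ρ).eventuallyLE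
  have h3 : 2 * c * ∫ z in perf S ρ, Xfld ℓ S z ≤ 2 * |c| * (67 * π ^ 2 + 2 * π ^ 3) := by
    refine (le_abs_self _).trans ?_
    rw [abs_mul, abs_mul, abs_of_pos (by norm_num : (0:ℝ) < 2)]
    gcongr
    exact cross_bound hℓ hℓ1 hρ hρℓ hS
  have h4 : c ^ 2 * ∫ z in perf S ρ, ‖z‖ ^ 2 ≤ c ^ 2 * (π / 2) := by gcongr
  linarith


lemma unit_deriv {p z : ℂ} (h : z ≠ p) : ∃ L : ℂ →L[ℝ] ℂ,
    HasFDerivAt (fun z : ℂ => (z - p) / ((‖z - p‖ : ℝ) : ℂ)) L z ∧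
    ∀ v, L v = (z - p) / ((‖z - p‖ : ℝ) : ℂ) * (Complex.I * (((v * (z - p)⁻¹).im : ℝ) : ℂ)) := by
  have hz : z - p ≠ 0 := sub_ne_zero.2 h
  have h1 : HasDerivAt (fun y : ℂ => Complex.log ((y - p) * (z - p)⁻¹)) ((z - p)⁻¹) z := by
    have h2 : HasDerivAt (fun y : ℂ => (y - p) * (z - p)⁻¹) ((z - p)⁻¹) z := by
      simpa using ((hasDerivAt_id z).sub_const p).mul_const ((z - p)⁻¹)
    have := h2.clog (by rw [mul_inv_cancel₀ hz]; exact Complex.one_mem_slitPlane)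
    rwa [mul_inv_cancel₀ hz, div_one] at this
  have h2 := h1.hasFDerivAt.restrictScalars ℝ
  have h3 := (Complex.ofRealCLM.hasFDerivAt.comp z (Complex.imCLM.hasFDerivAt.comp z h2))
  have h4 := ((h3.const_mul Complex.I).cexp).const_mul ((z - p) / ((‖z - p‖ : ℝ) : ℂ))
  refine ⟨_, h4.congr_of_eventuallyEq ?_, ?_⟩
  · have : ∀ᶠ y in nhds z, y ≠ p := isOpen_ne.mem_nhds h
    filter_upwards [this] with y hy
    have hy' : y - p ≠ 0 := sub_ne_zero.2 hy
    set w := (y - p) * (z - p)⁻¹ with hw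
    have hw0 : w ≠ 0 := mul_ne_zero hy' (inv_ne_zero hz)
    have e1 : Complex.exp (Complex.I * ((Complex.log w).im : ℂ)) = w / (‖w‖ : ℂ) := by
      rw [Complex.log_im, eq_div_iff (by simpa using hw0), mul_comm Complex.I, mul_comm]
      exact Complex.norm_mul_exp_arg_mul_I w
    show _ = _ * Complex.exp (Complex.I * ((Complex.log w).im : ℂ))
    rw [e1, hw, norm_mul, norm_inv]
    have n1 : ((‖z - p‖ : ℝ) : ℂ) ≠ 0 := by simpa using hz
    have n2 : ((‖y - p‖ : ℝ) : ℂ) ≠ 0 := by simpa using hy'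
    push_cast
    field_simp
  · intro v
    have : Complex.log ((z - p) * (z - p)⁻¹) = 0 := by rw [mul_inv_cancel₀ hz, Complex.log_one]
    simp [mul_inv_cancel₀ hz]

/-- the phase factor on ℂ -/
def Gph (S : Finset ℂ) (z : ℂ) : ℂ := ∏ p ∈ S, (z - p) / ((‖z - p‖ : ℝ) : ℂ)

lemma Gph_norm {S : Finset ℂ} {z : ℂ} (hz : z ∉ S) : ‖Gph S z‖ = 1 := by
  rw [Gph, norm_prod]
  apply Finset.prod_eq_one
  intro p hp
  have : z - p ≠ 0 := sub_ne_zero.2 (fun h => hz (h ▸ hp))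
  simp [this]

lemma Gph_deriv {S : Finset ℂ} {z : ℂ} (hz : z ∉ S) : ∃ L : ℂ →L[ℝ] ℂ,
    HasFDerivAt (Gph S) L z ∧
    ∀ v, L v = Gph S z * (Complex.I * (((v * ∑ p ∈ S, (z - p)⁻¹).im : ℝ) : ℂ)) := by
  classical
  induction S using Finset.induction_on with
  | empty =>
    refine ⟨0, ?_, by simp⟩
    have : Gph ∅ = fun _ => 1 := by funext z; simp [Gph]
    rw [this]; exact hasFDerivAt_const _ _
  | insert q S hq ih =>
    rw [Finset.mem_insert, not_or] at hz
    obtain ⟨L, hL, hLv⟩ := ih hz.2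
    obtain ⟨M, hM, hMv⟩ := unit_deriv hz.1
    have e : Gph (insert q S) = fun z => (z - q) / ((‖z - q‖ : ℝ) : ℂ) * Gph S z := by
      funext z; simp only [Gph]; rw [Finset.prod_insert hq]
    rw [e]
    refine ⟨_, hM.mul hL, ?_⟩
    intro v
    rw [Finset.sum_insert hq, mul_add, Complex.add_im]
    simp only [add_apply, smul_apply, smul_eq_mul, hLv, hMv]
    push_cast
    ring

/-- the isometry from the plane to ℂ -/
def TT : Pt ≃ₗᵢ[ℝ] ℂ := Complex.orthonormalBasisOneI.repr.symm

lemma TT_apply (x : Pt) : TT x = toC x := by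
  rw [TT, Complex.orthonormalBasisOneI_repr_symm_apply, toC]

lemma toC_re (x : Pt) : (toC x).re = x 0 := by simp [toC]
lemma toC_im (x : Pt) : (toC x).im = x 1 := by simp [toC]

lemma toC_norm (x : Pt) : ‖toC x‖ = ‖x‖ := by rw [← TT_apply, TT.norm_map]
lemma toC_norm_sub (x y : Pt) : ‖toC x - toC y‖ = ‖x - y‖ := by
  rw [← TT_apply, ← TT_apply, ← map_sub, TT.norm_map]

lemma cov_eq {ε Ω₀ : ℝ} {S : Finset ℂ} {x : Pt} (hx : toC x ∉ S) :
    covDensity ε Ω₀ (fun x => Gph S (toC x)) x =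
      ‖(∑ p ∈ S, (toC x - p)⁻¹) - ((Ω₀ / (2 * ε) : ℝ) : ℂ) * (starRingEnd ℂ) (toC x)‖ ^ 2 := by
  obtain ⟨L, hL, hLv⟩ := Gph_deriv hx
  set F := ∑ p ∈ S, (toC x - p)⁻¹
  have hT : HasFDerivAt (fun x : Pt => Gph S (toC x)) (L.comp (TT.toContinuousLinearEquiv : Pt →L[ℝ] ℂ)) x := by
    have h1 : HasFDerivAt (fun x : Pt => toC x) (TT.toContinuousLinearEquiv : Pt →L[ℝ] ℂ) x := by
      have := (TT.toContinuousLinearEquiv : Pt →L[ℝ] ℂ).hasFDerivAt (x := x)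
      refine this.congr_of_eventuallyEq (Eventually.of_forall (fun y => ?_))
      exact (TT_apply y).symm
    exact hL.comp x h1
  have t0 : TT (EuclideanSpace.single 0 1) = 1 := by rw [TT_apply]; simp [toC]
  have t1 : TT (EuclideanSpace.single 1 1) = Complex.I := by rw [TT_apply]; simp [toC]
  have p1 : pd1 (fun x : Pt => Gph S (toC x)) x = Gph S (toC x) * (Complex.I * ((F.im : ℝ) : ℂ)) := by
    rw [pd1, hT.fderiv]
    change L (TT (EuclideanSpace.single 0 1)) = _
    rw [t0, hLv, one_mul]
  have p2 : pd2 (fun x : Pt => Gph S (toC x)) x = Gph S (toC x) * (Complex.I * ((F.re : ℝ) : ℂ)) := by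
    rw [pd2, hT.fderiv]
    change L (TT (EuclideanSpace.single 1 1)) = _
    rw [t1, hLv, Complex.I_mul_im]
  rw [covDensity, p1, p2]
  set a := Ω₀ / (2 * ε)
  set g := Gph S (toC x)
  have hg : ‖g‖ = 1 := Gph_norm hx
  have e1 : g * (Complex.I * ((F.im : ℝ) : ℂ)) - Complex.I * ((-a * x 1 : ℝ) : ℂ) * g = g * Complex.I * ((F.im + a * x 1 : ℝ) : ℂ) := by
    push_cast; ring
  have e2 : g * (Complex.I * ((F.re : ℝ) : ℂ)) - Complex.I * ((a * x 0 : ℝ) : ℂ) * g = g * Complex.I * ((F.re - a * x 0 : ℝ) : ℂ) := by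
    push_cast; ring
  rw [e1, e2]
  simp only [norm_mul, hg, Complex.norm_I, Complex.norm_real, one_mul, Real.norm_eq_abs, sq_abs]
  rw [Complex.sq_norm, Complex.normSq_apply]
  simp only [Complex.sub_re, Complex.sub_im, Complex.mul_re, Complex.mul_im, Complex.conj_re, Complex.conj_im, Complex.ofReal_re, Complex.ofReal_im, toC_re, toC_im]
  ring

lemma latt_finite {ℓ : ℝ} (hℓ : 0 < ℓ) : (latt ℓ).Finite := by
  have hfin : (Set.Icc (-⌈ℓ⁻¹⌉) ⌈ℓ⁻¹⌉ ×ˢ Set.Icc (-⌈ℓ⁻¹⌉) ⌈ℓ⁻¹⌉ : Set (ℤ × ℤ)).Finite :=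
    (Set.finite_Icc _ _).prod (Set.finite_Icc _ _)
  refine (hfin.image (fun q : ℤ × ℤ => (!₂[(q.1 : ℝ) * ℓ, (q.2 : ℝ) * ℓ] : Pt))).subset ?_
  rintro p ⟨⟨m, hm⟩, ⟨n, hn⟩, hp⟩
  have hp1 : ‖p‖ ≤ 1 := by
    have : 0 < 2 * √2 * ℓ := by positivity
    linarith
  have key : ∀ k : ℤ, |(k : ℝ) * ℓ| ≤ 1 → k ∈ Set.Icc (-⌈ℓ⁻¹⌉) ⌈ℓ⁻¹⌉ := by
    intro k hk
    rw [abs_mul, abs_of_pos hℓ] at hk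
    have h1 : |(k : ℝ)| ≤ ℓ⁻¹ := by rwa [← one_div, le_div_iff₀ hℓ]
    have h2 := h1.trans (Int.le_ceil _)
    rw [← Int.cast_abs, Int.cast_le, abs_le] at h2
    exact h2
  have c0 : |p 0| ≤ 1 := by
    rw [← toC_re]; exact (Complex.abs_re_le_norm _).trans (by rwa [toC_norm])
  have c1 : |p 1| ≤ 1 := by
    rw [← toC_im]; exact (Complex.abs_im_le_norm _).trans (by rwa [toC_norm])
  refine ⟨(m, n), ⟨key m (hm ▸ c0), key n (hn ▸ c1)⟩, ?_⟩
  ext i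
  fin_cases i
  · simp [hm]
  · simp [hn]

lemma transfer {ℓ ρ ε Ω₀ : ℝ} (hℓ : 0 < ℓ) (hρ : 0 < ρ) : ∃ S : Finset ℂ, IsLat ℓ S ∧
    ∫ x in lambdaSet ℓ ρ, covDensity ε Ω₀ (gfun ℓ) x =
    ∫ z in perf S ρ, ‖(∑ p ∈ S, (z - p)⁻¹) - ((Ω₀ / (2 * ε) : ℝ) : ℂ) * (starRingEnd ℂ) z‖ ^ 2 := by
  classical
  have hinj : Function.Injective toC := by
    have : toC = TT := funext (fun x => (TT_apply x).symm)
    rw [this]; exact TT.injective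
  set S := (latt_finite hℓ).toFinset.image toC with hSdef
  have hmem : ∀ x : Pt, toC x ∈ S ↔ x ∈ latt ℓ := by
    intro x
    rw [hSdef, Finset.mem_image]
    simp only [Set.Finite.mem_toFinset]
    constructor
    · rintro ⟨y, hy, e⟩
      rwa [← hinj e]
    · intro h; exact ⟨x, h, rfl⟩
  have hS : IsLat ℓ S := by
    intro p
    obtain ⟨x, rfl⟩ := TT.surjective p
    rw [TT_apply, hmem, toC_re, toC_im, toC_norm]
    constructor
    · rintro ⟨⟨m, hm⟩, ⟨n, hn⟩, h⟩
      exact ⟨⟨m, n, hm, hn⟩, h⟩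
    · rintro ⟨⟨m, n, hm, hn⟩, h⟩
      exact ⟨⟨m, hm⟩, ⟨n, hn⟩, h⟩
  have hg : gfun ℓ = fun x => Gph S (toC x) := by
    funext x
    rw [gfun, finprod_mem_eq_finite_toFinset_prod _ (latt_finite hℓ), Gph, hSdef,
      Finset.prod_image (fun a _ b _ h => hinj h)]
    simp_rw [toC_norm_sub]
  have hset : lambdaSet ℓ ρ = TT ⁻¹' (perf S ρ) := by
    ext x
    simp only [lambdaSet, B1, perf, Set.mem_preimage, Set.mem_sdiff, Set.mem_iUnion, Metric.mem_ball, TT_apply, dist_eq_norm, sub_zero, toC_norm, exists_prop]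
    apply and_congr_right
    intro _
    apply not_congr
    constructor
    · rintro ⟨p, hp, h⟩
      exact ⟨toC p, (hmem p).2 hp, by rwa [toC_norm_sub]⟩
    · rintro ⟨q, hq, h⟩
      obtain ⟨p, rfl⟩ := TT.surjective q
      rw [TT_apply] at hq h
      exact ⟨p, (hmem p).1 hq, by rwa [toC_norm_sub] at h⟩
  refine ⟨S, hS, ?_⟩
  have hmp : MeasurePreserving TT volume volume := TT.measurePreserving
  rw [← hmp.setIntegral_preimage_emb TT.toHomeomorph.measurableEmbedding, ← hset, hg]
  have hmeas : MeasurableSet (lambdaSet ℓ ρ) := by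
    rw [hset]; exact TT.continuous.measurable (perf_meas S ρ)
  apply setIntegral_congr_fun hmeas
  intro x hx
  rw [hset] at hx
  have hxS : toC x ∉ S := by
    intro h
    have := perf_norm hx (toC x) h
    rw [TT_apply] at this
    simp at this; linarith
  show covDensity ε Ω₀ _ x = _
  rw [cov_eq hxS]
  simp only [TT_apply]

theorem stmt13 (Ω₀ δ η : ℝ) (hΩ : 0 < Ω₀) (hδ : 0 < δ) (hη : 5 / 2 < η) :
    ∃ (C ε₀ : ℝ), 0 < ε₀ ∧ ∀ ε : ℝ, 0 < ε → ε < ε₀ →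
      (∫ x in lambdaSet (δ * Real.sqrt ε) (ε ^ η),
        covDensity ε Ω₀ (gfun (δ * Real.sqrt ε)) x) ≤
      π / (2 * ε ^ 2) * (Ω₀ / 2 - π / δ ^ 2) ^ 2 + C * |Real.log ε| / ε := by
  refine ⟨2 * |π / δ ^ 2 - Ω₀ / 2| * (67 * π ^ 2 + 2 * π ^ 3) +
    (2320 * π ^ 3 + 8 * π ^ 2 * η + 512 * π ^ 3 * (|Real.log (2 / δ)| + 1)) / δ ^ 2,
    min (Real.exp (-1)) (min (δ ^ 8) (1 / (16 * δ ^ 2))), by positivity, ?_⟩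
  intro ε hε hlt
  obtain ⟨hlt1, hlt23⟩ := lt_min_iff.1 hlt
  obtain ⟨hlt2, hlt3⟩ := lt_min_iff.1 hlt23
  set s := √ε with hs
  have hs0 : 0 < s := Real.sqrt_pos.2 hε
  have hss : s ^ 2 = ε := Real.sq_sqrt hε.le
  have hℓ : 0 < δ * s := by positivity
  have hℓ2 : (δ * s) ^ 2 = δ ^ 2 * ε := by rw [mul_pow, hss]
  have hℓ1 : 4 * (δ * s) < 1 := by
    rw [lt_div_iff₀ (by positivity)] at hlt3
    nlinarith [hlt3, hℓ2]
  have hlog : Real.log ε < -1 := by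
    rw [Real.log_lt_iff_lt_exp hε]; exact hlt1
  have hε1 : ε < 1 := hlt1.trans (by rw [Real.exp_lt_one_iff]; norm_num)
  have habs : |Real.log ε| = - Real.log ε := abs_of_neg (by linarith)
  have hρ : 0 < ε ^ η := Real.rpow_pos_of_pos hε η
  have hsδ : s ≤ δ ^ 4 := by
    have : s ^ 2 ≤ (δ ^ 4) ^ 2 := by rw [hss]; ring_nf; linarith
    exact le_of_sq_le_sq this (by positivity)
  have hρℓ : ε ^ η ≤ (δ * s) ^ 4 := by
    have h1 : ε ^ η ≤ ε ^ (5 / 2 : ℝ) := Real.rpow_le_rpow_of_exponent_ge hε hε1.le hη.le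
    have h2 : ε ^ (5 / 2 : ℝ) = ε ^ 2 * s := by
      rw [show (5 / 2 : ℝ) = 2 + 1 / 2 by norm_num, Real.rpow_add hε, ← Real.sqrt_eq_rpow]
      norm_num
      exact Or.inl hs.symm
    have h3 : (δ * s) ^ 4 = ε ^ 2 * δ ^ 4 := by
      rw [mul_pow, show s ^ 4 = (s ^ 2) ^ 2 by ring, hss]; ring
    rw [h3]
    calc _ ≤ ε ^ 2 * s := h1.trans_eq h2
      _ ≤ _ := by gcongr
  obtain ⟨S, hS, htr⟩ := transfer (ε := ε) (Ω₀ := Ω₀) hℓ hρ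
  rw [htr]
  refine (main_C (Ω₀ / (2 * ε)) hℓ hℓ1 hρ hρℓ hS).trans ?_
  rw [hℓ2]
  have hc : π / (δ ^ 2 * ε) - Ω₀ / (2 * ε) = (π / δ ^ 2 - Ω₀ / 2) / ε := by
    field_simp
  rw [hc, abs_div, abs_of_pos hε]
  have hl1 : Real.log (1 / ε ^ η) = η * |Real.log ε| := by
    rw [one_div, Real.log_inv, Real.log_rpow hε, habs]; ring
  have hl2 : Real.log (2 / (δ * s)) ≤ (|Real.log (2 / δ)| + 1) * |Real.log ε| := by
    have e : Real.log (2 / (δ * s)) = Real.log (2 / δ) - Real.log ε / 2 := by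
      rw [← div_div, Real.log_div (by positivity) (by positivity), hs, Real.log_sqrt hε.le]
    rw [e, habs]
    nlinarith [le_abs_self (Real.log (2 / δ)), abs_nonneg (Real.log (2 / δ))]
  rw [hl1]
  set D := |π / δ ^ 2 - Ω₀ / 2|
  set M := |Real.log (2 / δ)| + 1
  set l := |Real.log ε|
  have hl : 1 ≤ l := by linarith
  have hD : 0 ≤ D := abs_nonneg _
  have a1 : ((π / δ ^ 2 - Ω₀ / 2) / ε) ^ 2 * (π / 2) = π / (2 * ε ^ 2) * (Ω₀ / 2 - π / δ ^ 2) ^ 2 := by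
    field_simp; ring
  have a2 : 2 * (D / ε) * (67 * π ^ 2 + 2 * π ^ 3) ≤ 2 * D * (67 * π ^ 2 + 2 * π ^ 3) * l / ε := by
    have : 2 * (D / ε) * (67 * π ^ 2 + 2 * π ^ 3) = 2 * D * (67 * π ^ 2 + 2 * π ^ 3) * 1 / ε := by ring
    rw [this]; gcongr
  have a3 : (2320 * π ^ 3 + 8 * π ^ 2 * (η * l) + 512 * π ^ 3 * Real.log (2 / (δ * s))) / (δ ^ 2 * ε) ≤
      (2320 * π ^ 3 + 8 * π ^ 2 * η + 512 * π ^ 3 * M) / δ ^ 2 * l / ε := by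
    calc _ ≤ (2320 * π ^ 3 * l + 8 * π ^ 2 * (η * l) + 512 * π ^ 3 * (M * l)) / (δ ^ 2 * ε) := by
          have h0 : 2320 * π ^ 3 ≤ 2320 * π ^ 3 * l := le_mul_of_one_le_right (by positivity) hl
          gcongr
      _ = _ := by field_simp
  rw [a1]
  have a4 : (2 * D * (67 * π ^ 2 + 2 * π ^ 3) + (2320 * π ^ 3 + 8 * π ^ 2 * η + 512 * π ^ 3 * M) / δ ^ 2) * l / ε =
    2 * D * (67 * π ^ 2 + 2 * π ^ 3) * l / ε + (2320 * π ^ 3 + 8 * π ^ 2 * η + 512 * π ^ 3 * M) / δ ^ 2 * l / ε := by ring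
  rw [a4]
  linarith
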